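/- arXiv:1305.6492 — 2 statements merged into one kernel-verified Lean document; each statement's English description precedes it below -/
import Mathlib

section
/- Let (A,⋆) be a ⋆-ring, l ∈ A^× a unit with l⋆ = l⁻¹, and ζ ∈ A a ⋆_l-self-dual element (ζ⋆·l = ζ) such that multiplication by ζ induces isomorphisms h⁺(A,⋆) → h⁺(A,⋆_l) and h⁻(A,⋆) → h⁻(A,⋆_l). Let λ₁,…,λ_k, μ₁,…,μ_m ∈ A with μ_j⋆ = μ_j for all j, such that the sequence λ₁, λ₁⋆, λ₂, λ₂⋆, …, λ_k, λ_k⋆, μ₁, …, μ_m is a regular sequence on A, and let 𝔞 ⊆ A be the ideal generated by these elements. Then 𝔞 is stable under ⋆ and under ⋆_l, both involutions descend to the quotient ring A/𝔞, and multiplication by the class of ζ induces isomorphisms h⁺(A/𝔞, ⋆) → h⁺(A/𝔞, ⋆_l) and h⁻(A/𝔞, ⋆) → h⁻(A/𝔞, ⋆_l). -/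
def kerP {M : Type*} [AddCommGroup M] (f : M →+ M) : AddSubgroup M :=
  (AddMonoidHom.id M - f).ker

def kerM {M : Type*} [AddCommGroup M] (f : M →+ M) : AddSubgroup M :=
  (AddMonoidHom.id M + f).ker

def imP {M : Type*} [AddCommGroup M] (f : M →+ M) : AddSubgroup M :=
  (AddMonoidHom.id M + f).range

def imM {M : Type*} [AddCommGroup M] (f : M →+ M) : AddSubgroup M :=
  (AddMonoidHom.id M - f).range

abbrev hPlus {M : Type*} [AddCommGroup M] (f : M →+ M) :=
  kerP f ⧸ (imP f).addSubgroupOf (kerP f)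

abbrev hMinus {M : Type*} [AddCommGroup M] (f : M →+ M) :=
  kerM f ⧸ (imM f).addSubgroupOf (kerM f)

def hPlusMk {M : Type*} [AddCommGroup M] (f : M →+ M) (x : M) (hx : x ∈ kerP f) :
    hPlus f := QuotientAddGroup.mk ⟨x, hx⟩

def hMinusMk {M : Type*} [AddCommGroup M] (f : M →+ M) (x : M) (hx : x ∈ kerM f) :
    hMinus f := QuotientAddGroup.mk ⟨x, hx⟩

/-- The `l`-twisted involution `a ↦ a⋆ · l` on a `⋆`-ring `A`. -/
def twistL {A : Type*} [CommRing A] (σ : A →+* A) (l : A) : A →+ A :=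
  (AddMonoidHom.mulRight l).comp σ.toAddMonoidHom

/-!
The Tate cohomology groups are the homology of the 2-periodic complex with differentials `1 - ⋆`
and `1 + ⋆`. Hence a short exact sequence of abelian groups with involutions yields an exact
hexagon, and by the five lemma the property that a map induces isomorphisms on Tate cohomology
passes from the first two terms to the third.

The generators are adjoined to the ideal in turn. A self-dual `μ`, regular modulo `I`, gives the
sequence `0 → A/I → A/I → A/(I, μ) → 0`. Multiplication by `λ` is not equivariant, but the Koszul
complex `0 → A/I → (A/I)² → A/I → A/(I, λ, λ⋆) → 0` of the pair `λ, λ⋆` is, if the involution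
interchanges the two middle copies and is negated on the first term. The middle term is induced,
so its Tate cohomology vanishes, and negating an involution only interchanges `h⁺` and `h⁻`.
-/

open Function RingTheory.Sequence

section PeriodicHomology

variable {M N M₁ M₂ M₃ N₁ N₂ N₃ : Type*}
  [AddCommGroup M] [AddCommGroup N]
  [AddCommGroup M₁] [AddCommGroup M₂] [AddCommGroup M₃]
  [AddCommGroup N₁] [AddCommGroup N₂] [AddCommGroup N₃]

/-- The homology `ker d / im e` of the 2-periodic complex on `M` with differentials alternately
`d` and `e`, at a term that `e` enters and `d` leaves.
`hPlus s` and `hMinus s` are, by unfolding, the cases `(d, e) = (1 - s, 1 + s)` and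
`(d, e) = (1 + s, 1 - s)`. -/
abbrev PeriodicHomology (d e : M →+ M) := d.ker ⧸ e.range.addSubgroupOf d.ker

namespace PeriodicHomology

variable {d e : M →+ M} {d' e' : N →+ N}

/-- The homology class of a cycle. -/
def ofCycle (e : M →+ M) (x : M) (hx : d x = 0) : PeriodicHomology d e :=
  QuotientAddGroup.mk ⟨x, hx⟩

theorem exists_ofCycle_eq (z : PeriodicHomology d e) : ∃ x hx, ofCycle e x hx = z := by
  obtain ⟨⟨x, hx⟩, rfl⟩ := QuotientAddGroup.mk_surjective z
  exact ⟨x, hx, rfl⟩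

instance [Subsingleton M] : Subsingleton (PeriodicHomology d e) :=
  QuotientAddGroup.mk_surjective.subsingleton

theorem ofCycle_eq_zero_iff {x : M} {hx : d x = 0} : ofCycle e x hx = 0 ↔ ∃ y, e y = x := by
  rw [ofCycle, QuotientAddGroup.eq_zero_iff, AddSubgroup.mem_addSubgroupOf, AddMonoidHom.mem_range]

theorem ofCycle_eq_ofCycle_iff {x y : M} {hx : d x = 0} {hy : d y = 0} :
    ofCycle e x hx = ofCycle e y hy ↔ ∃ z, e z = x - y := by
  rw [← sub_eq_zero]
  exact ofCycle_eq_zero_iff (hx := by rw [map_sub, hx, hy, sub_zero])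

/-- The map induced on homology by a morphism of 2-periodic complexes. -/
def map (f : M →+ N) (hd : Semiconj f d d') (he : Semiconj f e e') :
    PeriodicHomology d e →+ PeriodicHomology d' e' :=
  QuotientAddGroup.map _ _
    ((f.comp d.ker.subtype).codRestrict d'.ker fun x ↦ by
      rw [AddMonoidHom.mem_ker, AddMonoidHom.comp_apply, ← hd.eq]
      exact (congrArg f x.2).trans (map_zero f))
    fun x ⟨y, hy⟩ ↦ ⟨f y, (he.eq y).symm.trans (congrArg f hy)⟩

theorem map_ofCycle {f : M →+ N} {hd : Semiconj f d d'} {he : Semiconj f e e'} {x : M}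
    {hx : d x = 0} : map f hd he (ofCycle e x hx) =
      ofCycle e' (f x) ((hd.eq x).symm.trans ((congrArg f hx).trans (map_zero f))) :=
  rfl

theorem bijective_map_iff {f : M →+ N} {hd : Semiconj f d d'} {he : Semiconj f e e'} :
    Bijective (map f hd he) ↔ ∃ φ : PeriodicHomology d e ≃+ PeriodicHomology d' e',
      ∀ x hx hx', φ (ofCycle e x hx) = ofCycle e' (f x) hx' := by
  refine ⟨fun h ↦ ⟨.ofBijective (map f hd he) h, fun _ _ _ ↦ rfl⟩, fun ⟨φ, hφ⟩ ↦ ?_⟩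
  have hmap : ⇑(map f hd he) = φ := by
    funext z
    obtain ⟨x, hx, rfl⟩ := exists_ofCycle_eq z
    exact map_ofCycle.trans (hφ _ _ _).symm
  exact hmap ▸ φ.bijective

end PeriodicHomology

/-- A short exact sequence `0 → M₁ → M₂ → M₃ → 0` of 2-periodic complexes. That the outer terms
are complexes is a consequence. -/
structure IsPeriodicSES (d₁ e₁ : M₁ →+ M₁) (d₂ e₂ : M₂ →+ M₂) (d₃ e₃ : M₃ →+ M₃)
    (i : M₁ →+ M₂) (p : M₂ →+ M₃) : Prop where
  d_e : ∀ x, d₂ (e₂ x) = 0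
  e_d : ∀ x, e₂ (d₂ x) = 0
  semiconj_i_d : Semiconj i d₁ d₂
  semiconj_i_e : Semiconj i e₁ e₂
  semiconj_p_d : Semiconj p d₂ d₃
  semiconj_p_e : Semiconj p e₂ e₃
  injective : Injective i
  exact : Exact i p
  surjective : Surjective p

namespace IsPeriodicSES

variable {d₁ e₁ : M₁ →+ M₁} {d₂ e₂ : M₂ →+ M₂} {d₃ e₃ : M₃ →+ M₃} {i : M₁ →+ M₂} {p : M₂ →+ M₃}
  {d₁' e₁' : N₁ →+ N₁} {d₂' e₂' : N₂ →+ N₂} {d₃' e₃' : N₃ →+ N₃} {j : N₁ →+ N₂} {q : N₂ →+ N₃}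

open PeriodicHomology

theorem swap (h : IsPeriodicSES d₁ e₁ d₂ e₂ d₃ e₃ i p) :
    IsPeriodicSES e₁ d₁ e₂ d₂ e₃ d₃ i p where
  d_e := h.e_d
  e_d := h.d_e
  semiconj_i_d := h.semiconj_i_e
  semiconj_i_e := h.semiconj_i_d
  semiconj_p_d := h.semiconj_p_e
  semiconj_p_e := h.semiconj_p_d
  injective := h.injective
  exact := h.exact
  surjective := h.surjective

theorem exact_map (h : IsPeriodicSES d₁ e₁ d₂ e₂ d₃ e₃ i p) :
    Exact (map i h.semiconj_i_d h.semiconj_i_e) (map p h.semiconj_p_d h.semiconj_p_e) := by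
  intro z
  obtain ⟨x, hx, rfl⟩ := exists_ofCycle_eq z
  rw [map_ofCycle, ofCycle_eq_zero_iff]
  constructor
  · rintro ⟨y, hy⟩
    obtain ⟨y, rfl⟩ := h.surjective y
    obtain ⟨u, hu⟩ := (h.exact (x - e₂ y)).1 <| by rw [map_sub, h.semiconj_p_e.eq, hy, sub_self]
    have hdu : d₁ u = 0 := h.injective <| by
      rw [h.semiconj_i_d.eq, hu, map_sub, hx, h.d_e, sub_zero, map_zero]
    refine ⟨ofCycle e₁ u hdu, ?_⟩
    rw [map_ofCycle, ofCycle_eq_ofCycle_iff]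
    exact ⟨-y, by rw [hu, map_neg, sub_sub_cancel_left]⟩
  · rintro ⟨z, hz⟩
    obtain ⟨u, hu, rfl⟩ := exists_ofCycle_eq z
    rw [map_ofCycle] at hz
    obtain ⟨y, hy⟩ := ofCycle_eq_ofCycle_iff.1 hz
    refine ⟨-p y, ?_⟩
    rw [← map_neg, ← h.semiconj_p_e.eq, map_neg, hy, neg_sub, map_sub, h.exact.apply_apply_eq_zero,
      sub_zero]

theorem exists_lift_cycle (h : IsPeriodicSES d₁ e₁ d₂ e₂ d₃ e₃ i p) {x : M₃} (hx : d₃ x = 0) :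
    ∃ y u, p y = x ∧ i u = d₂ y ∧ e₁ u = 0 := by
  obtain ⟨y, rfl⟩ := h.surjective x
  obtain ⟨u, hu⟩ := (h.exact (d₂ y)).1 <| by rw [h.semiconj_p_d.eq, hx]
  exact ⟨y, u, rfl, hu, h.injective <| by rw [h.semiconj_i_e.eq, hu, h.e_d, map_zero]⟩

theorem exists_d_eq_sub (h : IsPeriodicSES d₁ e₁ d₂ e₂ d₃ e₃ i p) {y y' : M₂} {u u' : M₁}
    (hu : i u = d₂ y) (hu' : i u' = d₂ y') {z : M₃} (hz : e₃ z = p y - p y') :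
    ∃ w, d₁ w = u - u' := by
  obtain ⟨z, rfl⟩ := h.surjective z
  obtain ⟨w, hw⟩ := (h.exact (y - y' - e₂ z)).1 <| by
    rw [map_sub, map_sub, h.semiconj_p_e.eq, hz, sub_self]
  exact ⟨w, h.injective <| by
    rw [h.semiconj_i_d.eq, hw, map_sub, map_sub, map_sub, h.d_e, sub_zero, hu', hu]⟩

/-- The connecting homomorphism, which by `connecting_ofCycle` sends the class of `p y` to the
class of any `u` with `i u = d₂ y`. -/
noncomputable def connecting (h : IsPeriodicSES d₁ e₁ d₂ e₂ d₃ e₃ i p) :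
    PeriodicHomology d₃ e₃ →+ PeriodicHomology e₁ d₁ :=
  QuotientAddGroup.lift _
    (AddMonoidHom.mk'
      (fun x : d₃.ker ↦ ofCycle d₁ (h.exists_lift_cycle x.2).choose_spec.choose
        (h.exists_lift_cycle x.2).choose_spec.choose_spec.2.2)
      fun x x' ↦ by
        obtain ⟨hy, hu, -⟩ := (h.exists_lift_cycle x.2).choose_spec.choose_spec
        obtain ⟨hy', hu', -⟩ := (h.exists_lift_cycle x'.2).choose_spec.choose_spec
        obtain ⟨hy'', hu'', -⟩ := (h.exists_lift_cycle (x + x').2).choose_spec.choose_spec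
        refine ofCycle_eq_ofCycle_iff.2 (h.exists_d_eq_sub (z := 0) hu''
          ((map_add i _ _).trans (congrArg₂ _ hu hu') |>.trans (map_add d₂ _ _).symm) ?_)
        rw [hy'', map_add, hy, hy', AddSubgroup.coe_add, sub_self, map_zero])
    fun x ⟨z, hz⟩ ↦ by
      obtain ⟨hy, hu, -⟩ := (h.exists_lift_cycle x.2).choose_spec.choose_spec
      obtain ⟨w, hw⟩ := h.exists_d_eq_sub hu (u' := 0) (y' := 0) (by simp) (z := z) <| by
        rw [hy, map_zero, sub_zero]
        exact hz
      exact ofCycle_eq_zero_iff.2 ⟨w, by rw [hw, sub_zero]⟩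

theorem connecting_ofCycle (h : IsPeriodicSES d₁ e₁ d₂ e₂ d₃ e₃ i p) {y : M₂} {u : M₁}
    (hy : d₃ (p y) = 0) (hu : i u = d₂ y) (heu : e₁ u = 0) :
    h.connecting (ofCycle e₃ (p y) hy) = ofCycle d₁ u heu := by
  obtain ⟨hy', hu', -⟩ := (h.exists_lift_cycle hy).choose_spec.choose_spec
  exact ofCycle_eq_ofCycle_iff.2 <| h.exists_d_eq_sub (z := 0) hu' hu <| by
    rw [hy', sub_self, map_zero]

theorem exact_connecting (h : IsPeriodicSES d₁ e₁ d₂ e₂ d₃ e₃ i p) :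
    Exact (map p h.semiconj_p_d h.semiconj_p_e) h.connecting := by
  intro z
  obtain ⟨x, hx, rfl⟩ := exists_ofCycle_eq z
  obtain ⟨y, u, rfl, hu, heu⟩ := h.exists_lift_cycle hx
  rw [h.connecting_ofCycle hx hu heu, ofCycle_eq_zero_iff]
  constructor
  · rintro ⟨v, rfl⟩
    refine ⟨ofCycle e₂ (y - i v) ?_, ?_⟩
    · rw [map_sub, ← hu, h.semiconj_i_d.eq, sub_self]
    · rw [map_ofCycle, ofCycle_eq_ofCycle_iff]
      exact ⟨0, by rw [map_sub, h.exact.apply_apply_eq_zero, sub_zero, sub_self, map_zero]⟩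
  · rintro ⟨z, hz⟩
    obtain ⟨y', hy', rfl⟩ := exists_ofCycle_eq z
    rw [map_ofCycle] at hz
    obtain ⟨w, hw⟩ := ofCycle_eq_ofCycle_iff.1 hz
    obtain ⟨v, hv⟩ := h.exists_d_eq_sub (u := 0) (by rw [hy', map_zero]) hu hw
    exact ⟨-v, by rw [map_neg, hv, zero_sub, neg_neg]⟩

theorem connecting_exact (h : IsPeriodicSES d₁ e₁ d₂ e₂ d₃ e₃ i p) :
    Exact h.connecting (map i h.semiconj_i_e h.semiconj_i_d) := by
  intro z
  obtain ⟨u, hu, rfl⟩ := exists_ofCycle_eq z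
  rw [map_ofCycle, ofCycle_eq_zero_iff]
  constructor
  · rintro ⟨y, hy⟩
    have hpy : d₃ (p y) = 0 := by
      rw [← h.semiconj_p_d.eq, hy, h.exact.apply_apply_eq_zero]
    exact ⟨ofCycle e₃ (p y) hpy, h.connecting_ofCycle hpy hy.symm hu⟩
  · rintro ⟨z, hz⟩
    obtain ⟨x, hx, rfl⟩ := exists_ofCycle_eq z
    obtain ⟨y, v, rfl, hv, hev⟩ := h.exists_lift_cycle hx
    rw [h.connecting_ofCycle hx hv hev] at hz
    obtain ⟨w, hw⟩ := ofCycle_eq_ofCycle_iff.1 hz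
    exact ⟨y - i w, by rw [map_sub, ← hv, ← h.semiconj_i_d.eq, hw, map_sub, sub_sub_cancel]⟩

variable {f₁ : M₁ →+ N₁} {f₂ : M₂ →+ N₂} {f₃ : M₃ →+ N₃}

theorem connecting_naturality (h : IsPeriodicSES d₁ e₁ d₂ e₂ d₃ e₃ i p)
    (h' : IsPeriodicSES d₁' e₁' d₂' e₂' d₃' e₃' j q)
    (hd₁ : Semiconj f₁ d₁ d₁') (he₁ : Semiconj f₁ e₁ e₁') (hd₂ : Semiconj f₂ d₂ d₂')
    (hd₃ : Semiconj f₃ d₃ d₃') (he₃ : Semiconj f₃ e₃ e₃')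
    (hij : ∀ x, j (f₁ x) = f₂ (i x)) (hpq : ∀ x, q (f₂ x) = f₃ (p x)) :
    h'.connecting.comp (map f₃ hd₃ he₃) = (map f₁ he₁ hd₁).comp h.connecting := by
  refine AddMonoidHom.ext fun z ↦ ?_
  obtain ⟨x, hx, rfl⟩ := exists_ofCycle_eq z
  obtain ⟨y, u, rfl, hu, heu⟩ := h.exists_lift_cycle hx
  have hfu : j (f₁ u) = d₂' (f₂ y) := by rw [hij, hu, hd₂.eq]
  have hqy : d₃' (q (f₂ y)) = 0 := by rw [hpq, ← hd₃.eq, hx, map_zero]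
  have heu' : e₁' (f₁ u) = 0 := by rw [← he₁.eq, heu, map_zero]
  rw [AddMonoidHom.comp_apply, AddMonoidHom.comp_apply, h.connecting_ofCycle hx hu heu,
    map_ofCycle, map_ofCycle, ← h'.connecting_ofCycle hqy hfu heu']
  simp only [hpq]

theorem bijective_map_right (h : IsPeriodicSES d₁ e₁ d₂ e₂ d₃ e₃ i p)
    (h' : IsPeriodicSES d₁' e₁' d₂' e₂' d₃' e₃' j q)
    (hd₁ : Semiconj f₁ d₁ d₁') (he₁ : Semiconj f₁ e₁ e₁')
    (hd₂ : Semiconj f₂ d₂ d₂') (he₂ : Semiconj f₂ e₂ e₂')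
    (hd₃ : Semiconj f₃ d₃ d₃') (he₃ : Semiconj f₃ e₃ e₃')
    (hij : ∀ x, j (f₁ x) = f₂ (i x)) (hpq : ∀ x, q (f₂ x) = f₃ (p x))
    (hf₁ : Surjective (map f₁ hd₁ he₁)) (hf₁' : Bijective (map f₁ he₁ hd₁))
    (hf₂ : Bijective (map f₂ hd₂ he₂)) (hf₂' : Injective (map f₂ he₂ hd₂)) :
    Bijective (map f₃ hd₃ he₃) := by
  refine AddMonoidHom.bijective_of_surjective_of_bijective_of_bijective_of_injective
    _ _ _ _ _ _ _ _ _ _ _ _ _ ?_ ?_ (h.connecting_naturality h' hd₁ he₁ hd₂ hd₃ he₃ hij hpq) ?_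
    h.exact_map h.exact_connecting h.connecting_exact
    h'.exact_map h'.exact_connecting h'.connecting_exact hf₁ hf₂ hf₁' hf₂'
  all_goals
    refine AddMonoidHom.ext fun z ↦ ?_
    obtain ⟨x, hx, rfl⟩ := exists_ofCycle_eq z
    simp only [AddMonoidHom.comp_apply, map_ofCycle, hij, hpq]

end IsPeriodicSES

/-- A morphism of 2-periodic complexes which induces isomorphisms on both homology groups. -/
structure IsPeriodicQuasiIso (d e : M →+ M) (d' e' : N →+ N) (f : M →+ N) : Prop where
  semiconj_d : Semiconj f d d'
  semiconj_e : Semiconj f e e'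
  bijective_map : Bijective (PeriodicHomology.map f semiconj_d semiconj_e)
  bijective_map_swap : Bijective (PeriodicHomology.map f semiconj_e semiconj_d)

namespace IsPeriodicQuasiIso

theorem swap {d e : M →+ M} {d' e' : N →+ N} {f : M →+ N} (h : IsPeriodicQuasiIso d e d' e' f) :
    IsPeriodicQuasiIso e d e' d' f :=
  ⟨h.semiconj_e, h.semiconj_d, h.bijective_map_swap, h.bijective_map⟩

theorem of_periodicSES {d₁ e₁ : M₁ →+ M₁} {d₂ e₂ : M₂ →+ M₂} {d₃ e₃ : M₃ →+ M₃}
    {i : M₁ →+ M₂} {p : M₂ →+ M₃} {d₁' e₁' : N₁ →+ N₁} {d₂' e₂' : N₂ →+ N₂} {d₃' e₃' : N₃ →+ N₃}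
    {j : N₁ →+ N₂} {q : N₂ →+ N₃} {f₁ : M₁ →+ N₁} {f₂ : M₂ →+ N₂} {f₃ : M₃ →+ N₃}
    (h : IsPeriodicSES d₁ e₁ d₂ e₂ d₃ e₃ i p) (h' : IsPeriodicSES d₁' e₁' d₂' e₂' d₃' e₃' j q)
    (hf₁ : IsPeriodicQuasiIso d₁ e₁ d₁' e₁' f₁) (hf₂ : IsPeriodicQuasiIso d₂ e₂ d₂' e₂' f₂)
    (hij : ∀ x, j (f₁ x) = f₂ (i x)) (hpq : ∀ x, q (f₂ x) = f₃ (p x)) :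
    IsPeriodicQuasiIso d₃ e₃ d₃' e₃' f₃ where
  semiconj_d := h.surjective.forall.2 fun y ↦ by
    rw [← h.semiconj_p_d.eq, ← hpq, hf₂.semiconj_d.eq, h'.semiconj_p_d.eq, hpq]
  semiconj_e := h.surjective.forall.2 fun y ↦ by
    rw [← h.semiconj_p_e.eq, ← hpq, hf₂.semiconj_e.eq, h'.semiconj_p_e.eq, hpq]
  bijective_map := h.bijective_map_right h' hf₁.semiconj_d hf₁.semiconj_e hf₂.semiconj_d
    hf₂.semiconj_e _ _ hij hpq hf₁.bijective_map.surjective hf₁.bijective_map_swap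
    hf₂.bijective_map hf₂.bijective_map_swap.injective
  bijective_map_swap := h.swap.bijective_map_right h'.swap hf₁.semiconj_e hf₁.semiconj_d
    hf₂.semiconj_e hf₂.semiconj_d _ _ hij hpq hf₁.bijective_map_swap.surjective hf₁.bijective_map
    hf₂.bijective_map_swap hf₂.bijective_map.injective

end IsPeriodicQuasiIso

end PeriodicHomology

section Involution

variable {M N M' N' M₁ M₂ M₃ N₁ N₂ N₃ : Type*} [AddCommGroup M] [AddCommGroup N]
  [AddCommGroup M'] [AddCommGroup N'] [AddCommGroup M₁] [AddCommGroup M₂] [AddCommGroup M₃]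
  [AddCommGroup N₁] [AddCommGroup N₂] [AddCommGroup N₃]

theorem semiconj_id_sub {s : M →+ M} {t : N →+ N} {f : M →+ N} (hf : Semiconj f s t) :
    Semiconj f (AddMonoidHom.id M - s) (AddMonoidHom.id N - t) := fun x ↦
  (map_sub f _ _).trans (congrArg _ (hf x))

theorem semiconj_id_add {s : M →+ M} {t : N →+ N} {f : M →+ N} (hf : Semiconj f s t) :
    Semiconj f (AddMonoidHom.id M + s) (AddMonoidHom.id N + t) := fun x ↦
  (map_add f _ _).trans (congrArg _ (hf x))

/-- A map `f` of abelian groups with involutions `s` and `t` which induces isomorphisms on both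
Tate cohomology groups. -/
abbrev IsTateIso (s : M →+ M) (t : N →+ N) (f : M →+ N) : Prop :=
  IsPeriodicQuasiIso (.id M - s) (.id M + s) (.id N - t) (.id N + t) f

/-- A short exact sequence `0 → M₁ → M₂ → M₃ → 0` of abelian groups with involutions. -/
structure IsInvolutiveSES (s₁ : M₁ →+ M₁) (s₂ : M₂ →+ M₂) (s₃ : M₃ →+ M₃)
    (i : M₁ →+ M₂) (p : M₂ →+ M₃) : Prop where
  involutive : Involutive s₂
  semiconj_i : Semiconj i s₁ s₂
  semiconj_p : Semiconj p s₂ s₃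
  injective : Injective i
  exact : Exact i p
  surjective : Surjective p

theorem IsInvolutiveSES.isPeriodicSES {s₁ : M₁ →+ M₁} {s₂ : M₂ →+ M₂} {s₃ : M₃ →+ M₃}
    {i : M₁ →+ M₂} {p : M₂ →+ M₃} (h : IsInvolutiveSES s₁ s₂ s₃ i p) :
    IsPeriodicSES (.id M₁ - s₁) (.id M₁ + s₁) (.id M₂ - s₂) (.id M₂ + s₂)
      (.id M₃ - s₃) (.id M₃ + s₃) i p where
  d_e x := by simp [h.involutive _, add_comm]
  e_d x := by simp [h.involutive _]
  semiconj_i_d := semiconj_id_sub h.semiconj_i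
  semiconj_i_e := semiconj_id_add h.semiconj_i
  semiconj_p_d := semiconj_id_sub h.semiconj_p
  semiconj_p_e := semiconj_id_add h.semiconj_p
  injective := h.injective
  exact := h.exact
  surjective := h.surjective

/-- The map induced on kernels by a commutative square. -/
def kerMap (f : M →+ N) (f' : M' →+ N') {p : M →+ M'} {q : N →+ N'}
    (h : ∀ x, q (f x) = f' (p x)) : p.ker →+ q.ker :=
  (f.comp p.ker.subtype).codRestrict q.ker fun x ↦ by
    rw [AddMonoidHom.mem_ker, AddMonoidHom.comp_apply, h]
    exact (congrArg f' x.2).trans (map_zero f')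

theorem coe_kerMap {f : M →+ N} {f' : M' →+ N'} {p : M →+ M'} {q : N →+ N'}
    {h : ∀ x, q (f x) = f' (p x)} (x : p.ker) : (kerMap f f' h x : N) = f x :=
  rfl

theorem isInvolutiveSES_ker {s : M →+ M} {s' : M' →+ M'} {p : M →+ M'} (hs : Involutive s)
    (hp : Semiconj p s s') (hsurj : Surjective p) :
    IsInvolutiveSES (kerMap s s' hp.eq) s s' p.ker.subtype p where
  involutive := hs
  semiconj_i _ := rfl
  semiconj_p := hp
  injective := p.ker.subtype_injective
  exact x := ⟨fun hx ↦ ⟨⟨x, hx⟩, rfl⟩, fun ⟨y, hy⟩ ↦ hy ▸ y.2⟩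
  surjective := hsurj

namespace IsTateIso

variable {s : M →+ M} {t : N →+ N} {f : M →+ N}

theorem semiconj (h : IsTateIso s t f) : Semiconj f s t := fun x ↦ by
  simpa using h.semiconj_e.eq x

theorem neg (h : IsTateIso s t f) : IsTateIso (-s) (-t) f := by
  simpa only [IsTateIso, sub_neg_eq_add, ← sub_eq_add_neg] using h.swap

theorem iff_exists_addEquiv (hf : Semiconj f s t) :
    IsTateIso s t f ↔
      (∃ φ : hPlus s ≃+ hPlus t, ∀ x (hx : x ∈ kerP s) (hx' : f x ∈ kerP t),
        φ (hPlusMk s x hx) = hPlusMk t (f x) hx') ∧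
      (∃ φ : hMinus s ≃+ hMinus t, ∀ x (hx : x ∈ kerM s) (hx' : f x ∈ kerM t),
        φ (hMinusMk s x hx) = hMinusMk t (f x) hx') :=
  ⟨fun h ↦ ⟨PeriodicHomology.bijective_map_iff.1 h.bijective_map,
      PeriodicHomology.bijective_map_iff.1 h.bijective_map_swap⟩,
    fun h ↦ ⟨semiconj_id_sub hf, semiconj_id_add hf, PeriodicHomology.bijective_map_iff.2 h.1,
      PeriodicHomology.bijective_map_iff.2 h.2⟩⟩

theorem of_involutiveSES {s₁ : M₁ →+ M₁} {s₂ : M₂ →+ M₂} {s₃ : M₃ →+ M₃}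
    {i : M₁ →+ M₂} {p : M₂ →+ M₃} {t₁ : N₁ →+ N₁} {t₂ : N₂ →+ N₂} {t₃ : N₃ →+ N₃}
    {j : N₁ →+ N₂} {q : N₂ →+ N₃} {f₁ : M₁ →+ N₁} {f₂ : M₂ →+ N₂} {f₃ : M₃ →+ N₃}
    (h : IsInvolutiveSES s₁ s₂ s₃ i p) (h' : IsInvolutiveSES t₁ t₂ t₃ j q)
    (hf₁ : IsTateIso s₁ t₁ f₁) (hf₂ : IsTateIso s₂ t₂ f₂)
    (hij : ∀ x, j (f₁ x) = f₂ (i x)) (hpq : ∀ x, q (f₂ x) = f₃ (p x)) : IsTateIso s₃ t₃ f₃ :=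
  .of_periodicSES h.isPeriodicSES h'.isPeriodicSES hf₁ hf₂ hij hpq

theorem of_subsingleton [Subsingleton M] [Subsingleton N] {s : M →+ M} {t : N →+ N}
    {f : M →+ N} : IsTateIso s t f where
  semiconj_d _ := Subsingleton.elim _ _
  semiconj_e _ := Subsingleton.elim _ _
  bijective_map := ⟨injective_of_subsingleton _, surjective_to_subsingleton _⟩
  bijective_map_swap := ⟨injective_of_subsingleton _, surjective_to_subsingleton _⟩

theorem of_bijective {s' : M' →+ M'} {t' : N' →+ N'} {f' : M' →+ N'} {p : M →+ M'} {q : N →+ N'}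
    (hf : IsTateIso s t f) (hs : Involutive s) (ht : Involutive t) (hps : Semiconj p s s')
    (hqt : Semiconj q t t') (hp : Bijective p) (hq : Bijective q)
    (hpq : ∀ x, q (f x) = f' (p x)) : IsTateIso s' t' f' := by
  have : Subsingleton p.ker := ⟨fun x y ↦ Subtype.ext (hp.injective (x.2.trans y.2.symm))⟩
  have : Subsingleton q.ker := ⟨fun x y ↦ Subtype.ext (hq.injective (x.2.trans y.2.symm))⟩
  exact .of_involutiveSES (isInvolutiveSES_ker hs hps hp.surjective)
    (isInvolutiveSES_ker ht hqt hq.surjective) (f₁ := kerMap f f' hpq)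
    .of_subsingleton hf (fun _ ↦ rfl) hpq

end IsTateIso

/-- The involution `(x, y) ↦ (s y, s x)` of `M × M`, which makes it an induced module. -/
def swapInvolution (s : M →+ M) : M × M →+ M × M :=
  (s.comp (.snd M M)).prod (s.comp (.fst M M))

theorem swapInvolution_involutive {s : M →+ M} (hs : Involutive s) :
    Involutive (swapInvolution s) := fun x ↦ Prod.ext (hs x.1) (hs x.2)

theorem subsingleton_periodicHomology_sub_add_swapInvolution (s : M →+ M) :
    Subsingleton (PeriodicHomology (.id (M × M) - swapInvolution s)
      (.id (M × M) + swapInvolution s)) := by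
  refine subsingleton_of_forall_eq 0 fun z ↦ ?_
  obtain ⟨⟨a, b⟩, hab, rfl⟩ := PeriodicHomology.exists_ofCycle_eq z
  have hb : b - s a = 0 := congrArg Prod.snd hab
  refine PeriodicHomology.ofCycle_eq_zero_iff.2 ⟨(a, 0), ?_⟩
  simp [swapInvolution, sub_eq_zero.1 hb]

theorem subsingleton_periodicHomology_add_sub_swapInvolution (s : M →+ M) :
    Subsingleton (PeriodicHomology (.id (M × M) + swapInvolution s)
      (.id (M × M) - swapInvolution s)) := by
  have hneg : swapInvolution (-s) = -swapInvolution s := rfl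
  simpa only [hneg, sub_neg_eq_add, ← sub_eq_add_neg] using
    subsingleton_periodicHomology_sub_add_swapInvolution (-s)

theorem isTateIso_swapInvolution {s : M →+ M} {t : N →+ N} {f : M →+ N} (hf : Semiconj f s t) :
    IsTateIso (swapInvolution s) (swapInvolution t) (f.prodMap f) := by
  have := subsingleton_periodicHomology_sub_add_swapInvolution s
  have := subsingleton_periodicHomology_sub_add_swapInvolution t
  have := subsingleton_periodicHomology_add_sub_swapInvolution s
  have := subsingleton_periodicHomology_add_sub_swapInvolution t
  have hf' : Semiconj (f.prodMap f) (swapInvolution s) (swapInvolution t) :=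
    fun x ↦ Prod.ext (hf x.2) (hf x.1)
  exact ⟨semiconj_id_sub hf', semiconj_id_add hf',
    ⟨injective_of_subsingleton _, surjective_to_subsingleton _⟩,
    ⟨injective_of_subsingleton _, surjective_to_subsingleton _⟩⟩

/-- For involutions `s` of `M` and `s'` of `M'` and commuting endomorphisms `g`, `g'` of `M`
interchanged by `s` which form a regular sequence, `p : M → M'` is a quotient map by
`g M + g' M` compatible with the involutions. -/
structure IsKoszulQuotient (s g g' : M →+ M) (s' : M' →+ M') (p : M →+ M') : Prop where
  involutive : Involutive s
  semiconj : Semiconj s g g'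
  commute : Function.Commute g g'
  injective : Injective g
  regular : ∀ x y, g' x = g y → ∃ z, g z = x
  semiconj_p : Semiconj p s s'
  exact : Exact (g.coprod g') p
  surjective : Surjective p

namespace IsKoszulQuotient

variable {s g g' : M →+ M} {s' : M' →+ M'} {p : M →+ M'}

theorem semiconj_swap (H : IsKoszulQuotient s g g' s' p) : Semiconj s g' g := fun x ↦ by
  rw [← H.involutive x, ← H.semiconj.eq, H.involutive, H.involutive]

/-- The augmentation `(x, y) ↦ g x + g' y` of the Koszul complex, onto the kernel of `p`. -/
def augmentation (H : IsKoszulQuotient s g g' s' p) : M × M →+ p.ker :=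
  (g.coprod g').codRestrict p.ker H.exact.apply_apply_eq_zero

theorem coe_augmentation (H : IsKoszulQuotient s g g' s' p) (x : M × M) :
    (H.augmentation x : M) = g x.1 + g' x.2 :=
  rfl

/-- `s` acts by `-1` on the top term of the Koszul complex of `(g, g')` because it interchanges
`g` and `g'`. -/
theorem isInvolutiveSES (H : IsKoszulQuotient s g g' s' p) :
    IsInvolutiveSES (-s) (swapInvolution s) (kerMap s s' H.semiconj_p.eq) (g'.prod (-g))
      H.augmentation where
  involutive := swapInvolution_involutive H.involutive
  semiconj_i x := by simp [swapInvolution, H.semiconj.eq, H.semiconj_swap.eq]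
  semiconj_p x := Subtype.ext <| by
    rw [coe_augmentation, coe_kerMap, coe_augmentation, map_add, H.semiconj.eq,
      H.semiconj_swap.eq, add_comm]
    rfl
  injective x y hxy := H.injective (neg_injective (congrArg Prod.snd hxy))
  exact := by
    rintro ⟨x, y⟩
    rw [Subtype.ext_iff, coe_augmentation]
    refine ⟨fun hxy : g x + g' y = 0 ↦ ?_, ?_⟩
    · obtain ⟨z, rfl⟩ := H.regular y (-x) (by rw [map_neg, eq_neg_of_add_eq_zero_right hxy])
      have hx : g' z = -x := H.injective <| by
        rw [H.commute.eq, map_neg, eq_neg_of_add_eq_zero_right hxy]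
      exact ⟨-z, by simp [hx]⟩
    · rintro ⟨z, hz⟩
      obtain ⟨rfl, rfl⟩ := Prod.ext_iff.1 hz
      simp [H.commute.eq]
  surjective x := by
    obtain ⟨y, hy⟩ := (H.exact x).1 x.2
    exact ⟨y, Subtype.ext hy⟩

end IsKoszulQuotient

theorem IsTateIso.of_isKoszulQuotient {s g g' : M →+ M} {s' : M' →+ M'} {p : M →+ M'}
    {t h h' : N →+ N} {t' : N' →+ N'} {q : N →+ N'} {f : M →+ N} {f' : M' →+ N'}
    (H : IsKoszulQuotient s g g' s' p) (H' : IsKoszulQuotient t h h' t' q)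
    (hf : IsTateIso s t f) (hfg : Semiconj f g h) (hfg' : Semiconj f g' h')
    (hff' : ∀ x, q (f x) = f' (p x)) : IsTateIso s' t' f' := by
  have hker : IsTateIso (kerMap s s' H.semiconj_p.eq) (kerMap t t' H'.semiconj_p.eq)
      (kerMap f f' hff') :=
    .of_involutiveSES H.isInvolutiveSES H'.isInvolutiveSES hf.neg
      (isTateIso_swapInvolution hf.semiconj)
      (fun x ↦ by simp [hfg.eq, hfg'.eq])
      fun x ↦ Subtype.ext <| by
        simp [IsKoszulQuotient.coe_augmentation, coe_kerMap, hfg.eq, hfg'.eq]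
  exact .of_involutiveSES (isInvolutiveSES_ker H.involutive H.semiconj_p H.surjective)
    (isInvolutiveSES_ker H'.involutive H'.semiconj_p H'.surjective) hker hf (fun _ ↦ rfl) hff'

end Involution

section QuotientRing

variable {A : Type*} [CommRing A] {σ : A →+* A} {l l' ζ : A} {I : Ideal A}

theorem isWeaklyRegular_self_iff {L : List A} :
    IsWeaklyRegular A L ↔ ∀ n (hn : n < L.length) (x : A),
      L[n] * x ∈ Ideal.ofList (L.take n) → x ∈ Ideal.ofList (L.take n) := by
  simp only [isWeaklyRegular_iff, isSMulRegular_quotient_iff_mem_of_smul_mem, smul_eq_mul,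
    Ideal.mul_top]

theorem isWeaklyRegular_concat_iff {L : List A} {a : A} :
    IsWeaklyRegular A (L ++ [a]) ↔ IsWeaklyRegular A L ∧ IsSMulRegular (A ⧸ Ideal.ofList L) a := by
  rw [isWeaklyRegular_append_iff, isWeaklyRegular_singleton_iff, smul_eq_mul, Ideal.mul_top]

theorem twistL_one : twistL σ 1 = σ.toAddMonoidHom :=
  AddMonoidHom.ext fun a ↦ mul_one (σ a)

theorem semiconj_mulLeft_twistL (hζ : σ ζ * l = ζ) :
    Semiconj (AddMonoidHom.mulLeft ζ) σ.toAddMonoidHom (twistL σ l) :=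
  fun a ↦ show ζ * σ a = σ (ζ * a) * l by rw [map_mul, mul_right_comm, hζ]

theorem twistL_involutive (hσ : Involutive σ) (hl : σ l * l = 1) : Involutive (twistL σ l) :=
  fun a ↦ show σ (σ a * l) * l = a by rw [map_mul, hσ, mul_assoc, hl, mul_one]

/-- The `l`-twisted involution on the quotient by a stable ideal. -/
def quotientTwist (σ : A →+* A) (l : A) (I : Ideal A) (h : I ≤ I.comap σ) : A ⧸ I →+ A ⧸ I :=
  twistL (Ideal.quotientMap I σ h) (Ideal.Quotient.mk I l)

theorem quotientTwist_mk {h : I ≤ I.comap σ} (a : A) :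
    quotientTwist σ l I h (Ideal.Quotient.mk I a) = Ideal.Quotient.mk I (σ a * l) :=
  rfl

theorem eq_quotientTwist {τ : A ⧸ I →+ A ⧸ I} {h : I ≤ I.comap σ}
    (hτ : ∀ a, τ (Ideal.Quotient.mk I a) = Ideal.Quotient.mk I (σ a * l)) :
    τ = quotientTwist σ l I h :=
  DFunLike.ext _ _ <| Ideal.Quotient.mk_surjective.forall.2 hτ

theorem quotientTwist_involutive (hσ : Involutive σ) (hl : σ l * l = 1) (h : I ≤ I.comap σ) :
    Involutive (quotientTwist σ l I h) :=
  Ideal.Quotient.mk_surjective.forall.2 fun a ↦ by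
    rw [quotientTwist_mk, quotientTwist_mk, map_mul σ, hσ, mul_assoc, hl, mul_one]

theorem semiconj_quotientTwist (h : I ≤ I.comap σ) (a : A) :
    Semiconj (quotientTwist σ l I h) (AddMonoidHom.mulLeft (Ideal.Quotient.mk I a))
      (AddMonoidHom.mulLeft (Ideal.Quotient.mk I (σ a))) :=
  Ideal.Quotient.mk_surjective.forall.2 fun x ↦
    congrArg (Ideal.Quotient.mk I) <| show σ (a * x) * l = σ a * (σ x * l) by
      rw [map_mul, mul_assoc]

theorem commute_mulLeft (a b : A) :
    Function.Commute (AddMonoidHom.mulLeft a) (AddMonoidHom.mulLeft b) :=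
  fun x ↦ mul_left_comm a b x

theorem semiconj_factor {J : Ideal A} (h : I ≤ I.comap σ) (h' : J ≤ J.comap σ) (hIJ : I ≤ J) :
    Semiconj (Ideal.Quotient.factor hIJ).toAddMonoidHom
      (quotientTwist σ l I h) (quotientTwist σ l J h') :=
  Ideal.Quotient.mk_surjective.forall.2 fun _ ↦ rfl

theorem factor_mulLeft {J : Ideal A} (hIJ : I ≤ J) (a : A) (x : A ⧸ I) :
    (Ideal.Quotient.factor hIJ).toAddMonoidHom (AddMonoidHom.mulLeft (Ideal.Quotient.mk I a) x) =
      AddMonoidHom.mulLeft (Ideal.Quotient.mk J a)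
        ((Ideal.Quotient.factor hIJ).toAddMonoidHom x) :=
  map_mul (Ideal.Quotient.factor hIJ) _ _

theorem factor_sup_span_eq_zero_iff {S : Set A} {x : A ⧸ I} :
    Ideal.Quotient.factor (le_sup_left : I ≤ I ⊔ Ideal.span S) x = 0 ↔
      x ∈ Ideal.span (Ideal.Quotient.mk I '' S) := by
  rw [← RingHom.mem_ker, Ideal.Quotient.factor_ker, Ideal.map_sup, Ideal.map_quotient_self,
    bot_sup_eq, Ideal.map_span]

theorem exact_mulLeft_factor (a : A) :
    Exact (AddMonoidHom.mulLeft (Ideal.Quotient.mk I a))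
      (Ideal.Quotient.factor (le_sup_left : I ≤ I ⊔ Ideal.span {a})).toAddMonoidHom := by
  refine fun x ↦ factor_sup_span_eq_zero_iff.trans ?_
  rw [Set.image_singleton, Ideal.mem_span_singleton]
  exact exists_congr fun _ ↦ eq_comm

theorem exact_coprod_mulLeft_factor (a b : A) :
    Exact ((AddMonoidHom.mulLeft (Ideal.Quotient.mk I a)).coprod
        (AddMonoidHom.mulLeft (Ideal.Quotient.mk I b)))
      (Ideal.Quotient.factor (le_sup_left : I ≤ I ⊔ Ideal.span {a, b})).toAddMonoidHom := by
  refine fun x ↦ factor_sup_span_eq_zero_iff.trans ?_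
  rw [Set.image_pair, Ideal.mem_span_pair]
  simp [mul_comm]

theorem sup_span_le_comap (h : I ≤ I.comap σ) {S : Set A} (hS : Set.MapsTo σ S S) :
    I ⊔ Ideal.span S ≤ (I ⊔ Ideal.span S).comap σ :=
  sup_le (h.trans (Ideal.comap_mono le_sup_left)) <| Ideal.span_le.2 fun _ hx ↦
    Ideal.mem_sup_right (Ideal.subset_span (hS hx))

theorem isInvolutiveSES_factor (hσ : Involutive σ) (hl : σ l * l = 1) (h : I ≤ I.comap σ)
    {b : A} (hb : σ b = b) (hreg : IsSMulRegular (A ⧸ I) b)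
    (hJ : I ⊔ Ideal.span {b} ≤ (I ⊔ Ideal.span {b}).comap σ) :
    IsInvolutiveSES (quotientTwist σ l I h) (quotientTwist σ l I h) (quotientTwist σ l _ hJ)
      (AddMonoidHom.mulLeft (Ideal.Quotient.mk I b))
      (Ideal.Quotient.factor le_sup_left).toAddMonoidHom where
  involutive := quotientTwist_involutive hσ hl h
  semiconj_i x := by simpa only [hb] using ((semiconj_quotientTwist (l := l) h b).eq x).symm
  semiconj_p := semiconj_factor h hJ le_sup_left
  injective := hreg
  exact := exact_mulLeft_factor b
  surjective := Ideal.Quotient.factor_surjective le_sup_left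

theorem isKoszulQuotient_factor (hσ : Involutive σ) (hl : σ l * l = 1) (h : I ≤ I.comap σ)
    {a : A} (hreg : IsSMulRegular (A ⧸ I) a)
    (hreg' : IsSMulRegular (A ⧸ (I ⊔ Ideal.span {a})) (σ a))
    (hJ : I ⊔ Ideal.span {a, σ a} ≤ (I ⊔ Ideal.span {a, σ a}).comap σ) :
    IsKoszulQuotient (quotientTwist σ l I h)
      (AddMonoidHom.mulLeft (Ideal.Quotient.mk I a))
      (AddMonoidHom.mulLeft (Ideal.Quotient.mk I (σ a)))
      (quotientTwist σ l _ hJ) (Ideal.Quotient.factor le_sup_left).toAddMonoidHom where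
  involutive := quotientTwist_involutive hσ hl h
  semiconj := semiconj_quotientTwist h a
  commute := commute_mulLeft _ _
  injective := hreg
  regular x y hxy := (exact_mulLeft_factor a x).1 <| hreg'.right_eq_zero_of_smul <|
    (factor_mulLeft le_sup_left (σ a) x).symm.trans <| (exact_mulLeft_factor a _).2 ⟨y, hxy.symm⟩
  semiconj_p := semiconj_factor h hJ le_sup_left
  exact := exact_coprod_mulLeft_factor a (σ a)
  surjective := Ideal.Quotient.factor_surjective le_sup_left

/-- The ideal `I` is stable under `σ`, and multiplication by `ζ` induces isomorphisms from the
Tate cohomology of the `l`-twisted to that of the `l'`-twisted involution on `A ⧸ I`. -/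
structure IsTateIsoMod (σ : A →+* A) (l l' ζ : A) (I : Ideal A) : Prop where
  le_comap : I ≤ I.comap σ
  isTateIso : IsTateIso (quotientTwist σ l I le_comap) (quotientTwist σ l' I le_comap)
    (AddMonoidHom.mulLeft (Ideal.Quotient.mk I ζ))

namespace IsTateIsoMod

theorem sup_span_singleton (h : IsTateIsoMod σ l l' ζ I) (hσ : Involutive σ)
    (hl : σ l * l = 1) (hl' : σ l' * l' = 1) {b : A} (hb : σ b = b)
    (hreg : IsSMulRegular (A ⧸ I) b) : IsTateIsoMod σ l l' ζ (I ⊔ Ideal.span {b}) := by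
  have hJ : I ⊔ Ideal.span {b} ≤ (I ⊔ Ideal.span {b}).comap σ :=
    sup_span_le_comap h.le_comap <| by simp [hb]
  exact ⟨hJ, .of_involutiveSES (isInvolutiveSES_factor hσ hl h.le_comap hb hreg hJ)
    (isInvolutiveSES_factor hσ hl' h.le_comap hb hreg hJ) h.isTateIso h.isTateIso
    (commute_mulLeft _ _).eq (factor_mulLeft le_sup_left ζ)⟩

theorem sup_span_pair (h : IsTateIsoMod σ l l' ζ I) (hσ : Involutive σ)
    (hl : σ l * l = 1) (hl' : σ l' * l' = 1) {a : A} (hreg : IsSMulRegular (A ⧸ I) a)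
    (hreg' : IsSMulRegular (A ⧸ (I ⊔ Ideal.span {a})) (σ a)) :
    IsTateIsoMod σ l l' ζ (I ⊔ Ideal.span {a, σ a}) := by
  have hJ : I ⊔ Ideal.span {a, σ a} ≤ (I ⊔ Ideal.span {a, σ a}).comap σ :=
    sup_span_le_comap h.le_comap <| by simp [Set.MapsTo, hσ a]
  exact ⟨hJ, .of_isKoszulQuotient (isKoszulQuotient_factor hσ hl h.le_comap hreg hreg' hJ)
    (isKoszulQuotient_factor hσ hl' h.le_comap hreg hreg' hJ) h.isTateIso
    (commute_mulLeft _ _) (commute_mulLeft _ _) (factor_mulLeft le_sup_left ζ)⟩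

theorem bot (hσ : Involutive σ) (hl : σ l * l = 1) (hl' : σ l' * l' = 1)
    (h : IsTateIso (twistL σ l) (twistL σ l') (AddMonoidHom.mulLeft ζ)) :
    IsTateIsoMod σ l l' ζ ⊥ where
  le_comap := bot_le
  isTateIso := h.of_bijective (p := (Ideal.Quotient.mk ⊥).toAddMonoidHom)
    (q := (Ideal.Quotient.mk ⊥).toAddMonoidHom) (twistL_involutive hσ hl)
    (twistL_involutive hσ hl') (fun _ ↦ rfl) (fun _ ↦ rfl)
    (RingEquiv.quotientBot A).symm.bijective (RingEquiv.quotientBot A).symm.bijective fun _ ↦ rfl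

theorem ofList_flatMap_pair (h : IsTateIsoMod σ l l' ζ ⊥) (hσ : Involutive σ)
    (hl : σ l * l = 1) (hl' : σ l' * l' = 1) (L : List A)
    (hL : IsWeaklyRegular A (L.flatMap fun a ↦ [a, σ a])) :
    IsTateIsoMod σ l l' ζ (Ideal.ofList (L.flatMap fun a ↦ [a, σ a])) := by
  induction L using List.reverseRecOn with
  | nil => simpa using h
  | append_singleton L a ih =>
    rw [List.flatMap_append, List.flatMap_singleton, ← List.singleton_append,
      ← List.append_assoc] at hL ⊢
    obtain ⟨hL, hσa⟩ := isWeaklyRegular_concat_iff.1 hL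
    obtain ⟨hL, ha⟩ := isWeaklyRegular_concat_iff.1 hL
    rw [Ideal.ofList_append, Ideal.ofList_singleton] at hσa
    rw [List.append_assoc, Ideal.ofList_append, List.singleton_append, Ideal.ofList_cons,
      Ideal.ofList_singleton, ← Ideal.span_insert]
    exact (ih hL).sup_span_pair hσ hl hl' ha hσa

theorem ofList_flatMap_pair_append (h : IsTateIsoMod σ l l' ζ ⊥) (hσ : Involutive σ)
    (hl : σ l * l = 1) (hl' : σ l' * l' = 1) (L₁ L₂ : List A) (hfix : ∀ b ∈ L₂, σ b = b)
    (hL : IsWeaklyRegular A (L₁.flatMap (fun a ↦ [a, σ a]) ++ L₂)) :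
    IsTateIsoMod σ l l' ζ (Ideal.ofList (L₁.flatMap (fun a ↦ [a, σ a]) ++ L₂)) := by
  induction L₂ using List.reverseRecOn with
  | nil =>
    rw [List.append_nil] at hL ⊢
    exact h.ofList_flatMap_pair hσ hl hl' L₁ hL
  | append_singleton L₂ b ih =>
    rw [← List.append_assoc] at hL ⊢
    obtain ⟨hL, hb⟩ := isWeaklyRegular_concat_iff.1 hL
    rw [Ideal.ofList_append, Ideal.ofList_singleton]
    exact (ih (fun c hc ↦ hfix c (by simp [hc])) hL).sup_span_singleton hσ hl hl'
      (hfix b (by simp)) hb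

end IsTateIsoMod

end QuotientRing

/-- Let `(A,⋆)` be a `⋆`-ring, `l ∈ A^×` a unit with `l⋆ = l⁻¹`, and
`ζ ∈ A` a `⋆_l`-self-dual element such that multiplication by `ζ` induces isomorphisms
`h^±(A,⋆) → h^±(A,⋆_l)`.  Let `λ₁,…,λ_k, μ₁,…,μ_m ∈ A` with all `μ_j` `⋆`-self-dual, such
that `λ₁, λ₁⋆, …, λ_k, λ_k⋆, μ₁, …, μ_m` is a regular sequence on `A`, and let `𝔞` be the
ideal they generate.  Then `𝔞` is stable under `⋆` and `⋆_l`, both involutions descend to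
`A/𝔞`, and multiplication by the class of `ζ` induces isomorphisms
`h^±(A/𝔞,⋆) → h^±(A/𝔞,⋆_l)`. -/
theorem statement15
    {A : Type*} [CommRing A] (σ : A →+* A) (hσ : ∀ a, σ (σ a) = a)
    (l : Aˣ) (hl : σ l = ((l⁻¹ : Aˣ) : A))
    (ζ : A) (hζ : σ ζ * l = ζ)
    (hisoP : ∃ e : hPlus σ.toAddMonoidHom ≃+ hPlus (twistL σ (l : A)),
      ∀ (a : A) (ha : a ∈ kerP σ.toAddMonoidHom) (hb : ζ * a ∈ kerP (twistL σ (l : A))),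
        e (hPlusMk σ.toAddMonoidHom a ha) = hPlusMk (twistL σ (l : A)) (ζ * a) hb)
    (hisoM : ∃ e : hMinus σ.toAddMonoidHom ≃+ hMinus (twistL σ (l : A)),
      ∀ (a : A) (ha : a ∈ kerM σ.toAddMonoidHom) (hb : ζ * a ∈ kerM (twistL σ (l : A))),
        e (hMinusMk σ.toAddMonoidHom a ha) = hMinusMk (twistL σ (l : A)) (ζ * a) hb)
    {k m : ℕ} (lam : Fin k → A) (mu : Fin m → A) (hmu : ∀ j, σ (mu j) = mu j)
    (L : List A)
    (hL : L = (List.ofFn fun i : Fin k => [lam i, σ (lam i)]).flatten ++ List.ofFn mu)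
    -- `L` is a regular sequence on `A`: each entry is a non-zero-divisor modulo
    -- the ideal generated by the previous ones
    (hreg : ∀ (n : ℕ) (hn : n < L.length) (a : A),
      L.get ⟨n, hn⟩ * a ∈ (Ideal.span {x | x ∈ L.take n} : Ideal A) →
        a ∈ (Ideal.span {x | x ∈ L.take n} : Ideal A)) :
    (∀ a ∈ (Ideal.span {x | x ∈ L} : Ideal A), σ a ∈ (Ideal.span {x | x ∈ L} : Ideal A)) ∧
    (∀ a ∈ (Ideal.span {x | x ∈ L} : Ideal A),
        σ a * l ∈ (Ideal.span {x | x ∈ L} : Ideal A)) ∧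
    ∀ (σq τq : (A ⧸ (Ideal.span {x | x ∈ L} : Ideal A)) →+
        (A ⧸ (Ideal.span {x | x ∈ L} : Ideal A))),
      (∀ a : A, σq (Ideal.Quotient.mk _ a) = Ideal.Quotient.mk _ (σ a)) →
      (∀ a : A, τq (Ideal.Quotient.mk _ a) = Ideal.Quotient.mk _ (σ a * l)) →
      (∃ e : hPlus σq ≃+ hPlus τq,
        ∀ (a : A ⧸ (Ideal.span {x | x ∈ L} : Ideal A)) (ha : a ∈ kerP σq)
          (hb : (Ideal.Quotient.mk _ ζ) * a ∈ kerP τq),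
          e (hPlusMk σq a ha) = hPlusMk τq ((Ideal.Quotient.mk _ ζ) * a) hb) ∧
      (∃ e : hMinus σq ≃+ hMinus τq,
        ∀ (a : A ⧸ (Ideal.span {x | x ∈ L} : Ideal A)) (ha : a ∈ kerM σq)
          (hb : (Ideal.Quotient.mk _ ζ) * a ∈ kerM τq),
          e (hMinusMk σq a ha) = hMinusMk τq ((Ideal.Quotient.mk _ ζ) * a) hb) := by
  have hl₁ : σ l * l = 1 := by rw [hl, Units.inv_mul]
  have hone : σ 1 * 1 = 1 := by rw [map_one, one_mul]
  have hA : IsTateIso (twistL σ 1) (twistL σ l) (AddMonoidHom.mulLeft ζ) := by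
    rw [twistL_one]
    exact (IsTateIso.iff_exists_addEquiv (semiconj_mulLeft_twistL hζ)).2 ⟨hisoP, hisoM⟩
  have hpairs : (List.ofFn fun i ↦ [lam i, σ (lam i)]).flatten =
      (List.ofFn lam).flatMap fun a ↦ [a, σ a] := by
    rw [List.flatMap_def, List.map_ofFn, comp_def]
  rw [hpairs] at hL
  subst hL
  have hmod := (IsTateIsoMod.bot hσ hone hl₁ hA).ofList_flatMap_pair_append hσ hone hl₁
    (List.ofFn lam) (List.ofFn mu) (by simpa [List.mem_ofFn] using hmu)
    (isWeaklyRegular_self_iff.2 hreg)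
  refine ⟨fun a ha ↦ hmod.le_comap ha, fun a ha ↦ Ideal.mul_mem_right _ _ (hmod.le_comap ha),
    fun σq τq hσq hτq ↦ ?_⟩
  obtain rfl := eq_quotientTwist (l := 1) (h := hmod.le_comap) fun a ↦ by rw [hσq, mul_one]
  obtain rfl := eq_quotientTwist (h := hmod.le_comap) hτq
  exact (IsTateIso.iff_exists_addEquiv hmod.isTateIso.semiconj).1 hmod.isTateIso
end

section
/- Let X be a free abelian group and W a finite group acting on X by group automorphisms; let ℤ[X] be the group ring of X over ℤ, with standard basis e^ξ (ξ ∈ X), carrying the induced W-action, and let ℤ[X]^W be the subring of W-invariants. For δ ∈ X put S(δ) := Σ_{ξ ∈ W·δ} e^ξ (sum over the orbit of δ). Suppose given: elements ξ₁,…,ξ_l ∈ X, each fixed by W; elements ω₁,…,ω_r ∈ X; a subset F ⊆ X meeting every W-orbit in exactly one point, such that every element of F can be written uniquely in the form Σᵢ aᵢξᵢ + Σⱼ bⱼωⱼ with aᵢ ∈ ℤ and bⱼ ∈ ℕ, and conversely every element of this form belongs to F; and a partial order ≼ on F such that (i) for every δ ∈ F the set {ε ∈ F : ε ≺ δ} is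 finite, and (ii) for all δ, δ' ∈ F the product S(δ)·S(δ') equals S(δ+δ') plus a ℤ-linear combination of elements S(ε) with ε ∈ F and ε ≺ δ+δ'. Then the ring homomorphism Φ from ℤ[x₁^{±1},…,x_l^{±1}] ⊗ ℤ[w₁,…,w_r] (a Laurent polynomial ring tensored with a polynomial ring over ℤ) to ℤ[X]^W determined by Φ(xᵢ) = e^{ξᵢ} and Φ(wⱼ) = S(ωⱼ) is a ring isomorphism onto ℤ[X]^W. -/
/-- The orbit sum `S(δ) = Σ_{ξ ∈ W·δ} e^ξ` in the group ring `ℤ[X]`. -/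
noncomputable def orbitSum (W : Type*) {X : Type*} [AddCommGroup X] [DecidableEq X]
    [Group W] [Fintype W] [DistribMulAction W X] (δ : X) : AddMonoidAlgebra ℤ X :=
  ∑ γ ∈ Finset.image (fun w : W => w • δ) Finset.univ, AddMonoidAlgebra.single γ 1

/-- The ring action of `w ∈ W` on the group ring `ℤ[X]`, induced by the action on `X`. -/
noncomputable def actRing (W : Type*) {X : Type*} [AddCommGroup X]
    [Group W] [DistribMulAction W X] (w : W) :
    AddMonoidAlgebra ℤ X →+* AddMonoidAlgebra ℤ X :=
  AddMonoidAlgebra.mapDomainRingHom ℤ (DistribMulAction.toAddMonoidHom X w)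

/-- The invariant subring `ℤ[X]^W`. -/
noncomputable def invSubring (W : Type*) (X : Type*) [AddCommGroup X]
    [Group W] [DistribMulAction W X] : Subring (AddMonoidAlgebra ℤ X) where
  carrier := {p | ∀ w : W, actRing W w p = p}
  mul_mem' := fun ha hb w => by rw [map_mul, ha w, hb w]
  one_mem' := fun w => map_one _
  add_mem' := fun ha hb w => by rw [map_add, ha w, hb w]
  zero_mem' := fun w => map_zero _
  neg_mem' := fun ha w => by rw [map_neg, ha w]

/-!
The set `F = {Σ aᵢξᵢ + Σ bⱼωⱼ}` is a finitely generated monoid, and the orbits of its elements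
cover `X`; by B. H. Neumann's covering lemma `F` then spans a subgroup of finite index, so that `X`
carries a `W`-invariant inner product `B` and `F` consists of the points of `X` in a polyhedral
cone. Since the cone is a strict fundamental domain, it behaves like a Weyl chamber:
`B x (w y) ≤ B x y` for all `x, y ∈ F` and `w ∈ W`.

Hence every exponent of `S(δ)` is dominated by `δ`, and dominance is compatible with addition, so
that leading exponents are multiplicative: the image of a monomial has a leading exponent, namely
its weight, with coefficient `1`. As the weights run through `F` once, the images of the monomials
are unitriangular with respect to the basis `S(δ)`, `δ ∈ F`, of `ℤ[X]^W`; the triangular recursion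
terminates because strictly dominated elements of `F` are strictly shorter for `B`.
-/

open Function

section OrbitSection

variable {X : Type*} {W : Type*} [Group W] [MulAction W X]

/-- A subset `F` of `X` is an *orbit section* for `W` if it meets every `W`-orbit in exactly one
point. -/
def IsOrbitSection (W : Type*) {X : Type*} [Group W] [MulAction W X] (F : Set X) : Prop :=
  ∀ x : X, ∃! γ : X, γ ∈ F ∧ γ ∈ MulAction.orbit W x

theorem IsOrbitSection.exists_smul_mem {F : Set X} (hF : IsOrbitSection W F) (x : X) :
    ∃ w : W, w • x ∈ F := by
  obtain ⟨_, ⟨hmem, w, rfl⟩, _⟩ := hF x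
  exact ⟨w, hmem⟩

theorem IsOrbitSection.smul_eq_self {F : Set X} (hF : IsOrbitSection W F) {x : X} {w : W}
    (hx : x ∈ F) (hwx : w • x ∈ F) : w • x = x :=
  (hF x).unique ⟨hwx, w, rfl⟩ ⟨hx, MulAction.mem_orbit_self x⟩

end OrbitSection

section InvariantForm

variable {X : Type*} [AddCommGroup X] {W : Type*} [Group W] [DistribMulAction W X]

/-- A `W`-invariant inner product on `X` with integer values. -/
structure IsInvariantForm (W : Type*) {X : Type*} [AddCommGroup X] [Group W]
    [DistribMulAction W X] (B : X →ₗ[ℤ] X →ₗ[ℤ] ℤ) : Prop where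
  symm : ∀ x y, B x y = B y x
  smul_smul : ∀ (w : W) x y, B (w • x) (w • y) = B x y
  self_pos : ∀ x, x ≠ 0 → 0 < B x x

theorem IsInvariantForm.self_nonneg {B : X →ₗ[ℤ] X →ₗ[ℤ] ℤ} (hB : IsInvariantForm W B) (x : X) :
    0 ≤ B x x := by
  obtain rfl | hx := eq_or_ne x 0
  · rw [map_zero]
  · exact (hB.self_pos x hx).le

theorem IsInvariantForm.eq_of_self_le {B : X →ₗ[ℤ] X →ₗ[ℤ] ℤ} (hB : IsInvariantForm W B) {x y : X}
    (hyx : B y y ≤ B x x) (hxy : B x x ≤ B x y) : y = x := by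
  by_contra hne
  have hpos := hB.self_pos (y - x) (sub_ne_zero.2 hne)
  simp only [map_sub, LinearMap.sub_apply, hB.symm y x] at hpos
  linarith

theorem exists_isInvariantForm_of_injective [Finite W] {σ : Type*} [Finite σ]
    (f : X →ₗ[ℤ] σ → ℤ) (hf : Injective f) :
    ∃ B : X →ₗ[ℤ] X →ₗ[ℤ] ℤ, IsInvariantForm W B := by
  have := Fintype.ofFinite W
  have := Fintype.ofFinite σ
  let smulHom (w : W) : X →ₗ[ℤ] X := (DistribSMul.toAddMonoidHom X w).toIntLinearMap
  let B : X →ₗ[ℤ] X →ₗ[ℤ] ℤ :=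
    ∑ w, (dotProductBilin ℤ ℤ).compl₁₂ (f ∘ₗ smulHom w) (f ∘ₗ smulHom w)
  have hB (x y : X) : B x y = ∑ w : W, f (w • x) ⬝ᵥ f (w • y) := by
    simp only [B, LinearMap.sum_apply, LinearMap.compl₁₂_apply]
    rfl
  refine ⟨B, fun x y => ?_, fun w x y => ?_, fun x hx => ?_⟩
  · simp only [hB, dotProduct_comm]
  · simp only [hB, ← mul_smul]
    exact Fintype.sum_equiv (Equiv.mulRight w) _ _ fun _ => rfl
  · have hpos (w : W) : 0 < f (w • x) ⬝ᵥ f (w • x) := by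
      refine lt_of_le_of_ne (Finset.sum_nonneg fun i _ => mul_self_nonneg _) fun h => ?_
      have hzero : f (w • x) = f 0 := (dotProduct_self_eq_zero.1 h.symm).trans (map_zero f).symm
      exact (smul_ne_zero_iff_ne w).2 hx (hf hzero)
    rw [hB]
    exact Finset.sum_pos (fun w _ => hpos w) Finset.univ_nonempty

end InvariantForm

section Chamber

variable {X : Type*} [AddCommGroup X] {W : Type*} [Group W] [DistribMulAction W X]
  {κ : Type*} {ℓ : κ → X →ₗ[ℤ] ℤ} {B : X →ₗ[ℤ] X →ₗ[ℤ] ℤ}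

/-- The points of `X` in the rational polyhedral cone cut out by the inequalities `0 ≤ ℓ j`. -/
def integralCone (ℓ : κ → X →ₗ[ℤ] ℤ) : AddSubmonoid X where
  carrier := {x | ∀ j, 0 ≤ ℓ j x}
  zero_mem' := fun j => (map_zero (ℓ j)).ge
  add_mem' := fun hx hy j => (map_add (ℓ j) _ _).symm ▸ add_nonneg (hx j) (hy j)

theorem mem_integralCone {x : X} : x ∈ integralCone ℓ ↔ ∀ j, 0 ≤ ℓ j x :=
  Iff.rfl

-- Finitely many `w` have to bring all the points `n • z + y` into the cone, so one of them does so
-- for arbitrarily large `n`; it then keeps the limiting direction `z` in the cone.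
theorem exists_smul_eq_self_and_nsmul_add_smul_mem [Finite W]
    (hcone : IsOrbitSection W (integralCone ℓ : Set X)) {z : X} (hz : z ∈ integralCone ℓ) (y : X) :
    ∃ (w : W) (n : ℕ), w • z = z ∧ n • z + w • y ∈ integralCone ℓ := by
  choose f hf using fun n : ℕ => hcone.exists_smul_mem (n • z + y)
  obtain ⟨w, hw⟩ := Finite.exists_infinite_fiber f
  have hinf : (f ⁻¹' {w}).Infinite := Set.infinite_coe_iff.1 hw
  have hmem : ∀ n ∈ f ⁻¹' {w}, n • (w • z) + w • y ∈ integralCone ℓ := by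
    rintro n rfl
    rw [← smul_comm (f n) n z, ← smul_add]
    exact hf n
  have hwz : w • z ∈ integralCone ℓ := by
    rw [mem_integralCone]
    intro j
    by_contra! hneg
    obtain ⟨n, hn, hlt⟩ := hinf.exists_gt (ℓ j (w • y)).toNat
    have hnonneg := hmem n hn j
    rw [map_add, map_nsmul, nsmul_eq_mul] at hnonneg
    have hlt' : ℓ j (w • y) < n := Int.toNat_lt_of_ne_zero (by omega) |>.1 hlt
    nlinarith
  have hfix : w • z = z := hcone.smul_eq_self hz hwz
  obtain ⟨n, hn⟩ := hinf.nonempty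
  exact ⟨w, n, hfix, hfix ▸ hmem n hn⟩

-- Up to a positive factor, `a • x + b • y` is where the segment from `x` to `y` leaves the cone.
theorem exists_exit_point [Finite κ] {x y : X} {n : ℕ} (hx : x ∈ integralCone ℓ)
    (hxy : n • x + y ∈ integralCone ℓ) (hy : y ∉ integralCone ℓ) :
    ∃ a b : ℤ, 0 ≤ a ∧ 0 < b ∧ a • x + b • y ∈ integralCone ℓ ∧
      ∀ m : ℕ, m • (a • x + b • y) + y ∉ integralCone ℓ := by
  have hviolated : ∃ j, ℓ j y < 0 := by
    simpa only [mem_integralCone, not_forall, not_le] using hy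
  have hpos : ∀ j ∈ {j | ℓ j y < 0}, 0 < ℓ j x := by
    intro j (hj : ℓ j y < 0)
    have hnonneg := hxy j
    rw [map_add, map_nsmul, nsmul_eq_mul] at hnonneg
    exact pos_of_mul_pos_right (by linarith) n.cast_nonneg
  obtain ⟨k, hk, hmax⟩ := Set.exists_max_image {j | ℓ j y < 0}
    (fun j => (-(ℓ j y) : ℚ) / ℓ j x) (Set.toFinite _) hviolated
  replace hk : ℓ k y < 0 := hk
  have hxk := hpos k hk
  refine ⟨-ℓ k y, ℓ k x, (neg_pos.2 hk).le, hxk, fun j => ?_, fun m hm => ?_⟩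
  · rw [map_add, map_smul, map_smul, smul_eq_mul, smul_eq_mul]
    obtain hj | hj := lt_or_ge (ℓ j y) 0
    · have hle := hmax j hj
      rw [div_le_div_iff₀ (mod_cast hpos j hj) (mod_cast hxk)] at hle
      have hle' : -ℓ j y * ℓ k x ≤ -ℓ k y * ℓ j x := by exact_mod_cast hle
      linarith
    · exact add_nonneg (mul_nonneg (neg_pos.2 hk).le (hx j)) (mul_nonneg hxk.le hj)
  · have hexit := hm k
    simp only [map_add, map_smul, map_nsmul, smul_eq_mul, nsmul_eq_mul] at hexit
    linarith

-- Let `z` be the exit point of the segment from `x` to `y`. Some `s` fixing `z` brings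
-- `m • z + s • y` into the cone. As `B z (s • y) = B z y`, maximality at `x` forces `s • y = y`, so
-- that the segment does not leave the cone at `z`.
theorem mem_integralCone_of_forall_form_smul_le [Finite W] [Finite κ] (hB : IsInvariantForm W B)
    (hcone : IsOrbitSection W (integralCone ℓ : Set X)) {x y : X} {n : ℕ}
    (hx : x ∈ integralCone ℓ) (hxy : n • x + y ∈ integralCone ℓ)
    (hmax : ∀ u : W, B x (u • y) ≤ B x y) : y ∈ integralCone ℓ := by
  by_contra hy
  obtain ⟨a, b, ha, hb, hz, hexit⟩ := exists_exit_point hx hxy hy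
  obtain ⟨s, m, hsz, hm⟩ := exists_smul_eq_self_and_nsmul_add_smul_mem hcone hz y
  have hzy := hB.smul_smul s (a • x + b • y) y
  rw [hsz] at hzy
  simp only [map_add, map_smul, LinearMap.add_apply, LinearMap.smul_apply, smul_eq_mul] at hzy
  have hle : B y y ≤ B y (s • y) := by
    have := mul_le_mul_of_nonneg_left (hmax s) ha
    exact le_of_mul_le_mul_left (by linarith) hb
  have hsy : s • y = y := hB.eq_of_self_le (hB.smul_smul s y y).le hle
  rw [hsy] at hm
  exact hexit m hm

theorem form_smul_le_of_mem_integralCone [Finite W] [Finite κ] (hB : IsInvariantForm W B)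
    (hcone : IsOrbitSection W (integralCone ℓ : Set X)) {x y : X}
    (hx : x ∈ integralCone ℓ) (hy : y ∈ integralCone ℓ) (u : W) : B x (u • y) ≤ B x y := by
  obtain ⟨v, hv⟩ := Finite.exists_max fun u : W => B x (u • y)
  obtain ⟨w, n, hwx, hmem⟩ := exists_smul_eq_self_and_nsmul_add_smul_mem hcone hx (v • y)
  have hmax (u : W) : B x (u • y) ≤ B x (w • v • y) := by
    have hw := hB.smul_smul w x (v • y)
    rw [hwx] at hw
    exact hw ▸ hv u
  have hwv : (w * v) • y ∈ integralCone ℓ := by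
    rw [mul_smul]
    refine mem_integralCone_of_forall_form_smul_le hB hcone hx hmem fun u => ?_
    simpa only [mul_smul] using hmax (u * w * v)
  have hfix : w • v • y = y := (mul_smul w v y).symm.trans (hcone.smul_eq_self hy hwv)
  exact (hmax u).trans_eq (by rw [hfix])

end Chamber

section Weights

variable {X : Type*} [AddCommGroup X] {W : Type*} [Group W] [DistribMulAction W X]
  {ι κ : Type*} [Fintype ι] [Fintype κ] {ξ : ι → X} {ω : κ → X}

/-- The homomorphism `(a, b) ↦ Σ aᵢξᵢ + Σ bⱼωⱼ`, from exponents of monomials to `X`. -/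
def weight (ξ : ι → X) (ω : κ → X) : (ι → ℤ) × (κ → ℕ) →+ X where
  toFun p := (∑ i, p.1 i • ξ i) + ∑ j, (p.2 j : ℤ) • ω j
  map_zero' := by simp
  map_add' p q := by
    simp only [Prod.fst_add, Prod.snd_add, Pi.add_apply, Nat.cast_add, add_smul,
      Finset.sum_add_distrib]
    abel

theorem weight_apply (p : (ι → ℤ) × (κ → ℕ)) :
    weight ξ ω p = (∑ i, p.1 i • ξ i) + ∑ j, (p.2 j : ℤ) • ω j :=
  rfl

theorem linearCombination_sumElim_eq_weight (p : (ι → ℤ) × (κ → ℕ)) :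
    Fintype.linearCombination ℤ (Sum.elim ξ ω) (Sum.elim p.1 fun j => (p.2 j : ℤ)) =
      weight ξ ω p := by
  simp [Fintype.linearCombination_apply, weight_apply]

theorem linearCombination_sumElim_injective (hinj : Injective (weight ξ ω)) :
    Injective (Fintype.linearCombination ℤ (Sum.elim ξ ω)) := by
  rw [injective_iff_map_eq_zero]
  intro c hc
  have hparts : weight ξ ω (fun i => c (.inl i), fun j => (c (.inr j)).toNat) =
      weight ξ ω (0, fun j => (-c (.inr j)).toNat) := by
    rw [← linearCombination_sumElim_eq_weight, ← linearCombination_sumElim_eq_weight,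
      ← sub_eq_zero, ← map_sub, ← hc]
    congr 1
    ext (i | j)
    · simp
    · simp only [Pi.sub_apply, Sum.elim_inr]
      omega
  have heq := Prod.mk.inj (hinj hparts)
  ext (i | j)
  · exact congrFun heq.1 i
  · have := congrFun heq.2 j
    simp only [Pi.zero_apply]
    omega

theorem IsOrbitSection.isAddTorsionFree_of_injective {P : Type*} [AddCommMonoid P]
    [IsAddTorsionFree P] {f : P →+ X} (hf : Injective f)
    (hrange : IsOrbitSection W (AddMonoidHom.mrange f : Set X)) : IsAddTorsionFree X := by
  refine ⟨fun n hn x y (hxy : n • x = n • y) => ?_⟩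
  obtain ⟨w, p, hp⟩ := hrange.exists_smul_mem (x - y)
  have hnp : n • p = n • 0 := hf <| by
    rw [map_nsmul, hp, smul_comm, nsmul_sub, hxy, sub_self, smul_zero, smul_zero, map_zero]
  rw [nsmul_right_injective hn hnp, map_zero] at hp
  exact sub_eq_zero.1 ((smul_eq_zero_iff_eq w).1 hp.symm)

theorem IsOrbitSection.mem_of_nsmul_mem [IsAddTorsionFree X] {F : AddSubmonoid X}
    (hF : IsOrbitSection W (F : Set X)) {n : ℕ} (hn : n ≠ 0) {x : X} (hx : n • x ∈ F) :
    x ∈ F := by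
  obtain ⟨w, hw⟩ := hF.exists_smul_mem x
  have hnw : w • n • x ∈ F := smul_comm w n x ▸ F.nsmul_mem hw n
  have hfix : n • w • x = n • x := smul_comm w n x ▸ hF.smul_eq_self hx hnw
  exact nsmul_right_injective hn hfix ▸ hw

open scoped Pointwise in
theorem finiteIndex_of_forall_exists_smul_mem [Finite W] {L : AddSubgroup X}
    (hL : ∀ x : X, ∃ w : W, w • x ∈ L) : L.FiniteIndex := by
  have := Fintype.ofFinite W
  let translate (w : W) : AddSubgroup X := L.comap (DistribSMul.toAddMonoidHom X w)
  have hcover : ⋃ w ∈ (Finset.univ : Finset W), (0 : X) +ᵥ (translate w : Set X) = Set.univ := by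
    ext x
    simpa [translate] using hL x
  obtain ⟨w, _, hw⟩ := AddSubgroup.exists_finiteIndex_of_leftCoset_cover hcover
  rw [AddSubgroup.finiteIndex_iff] at hw ⊢
  rwa [AddSubgroup.index_comap_of_surjective L (MulAction.surjective w)] at hw

theorem exists_linearMap_apply_eq_nsmul {M : Type*} [AddCommGroup M] (g : M →ₗ[ℤ] X)
    (hg : Injective g) (hindex : g.range.toAddSubgroup.FiniteIndex) :
    ∃ (N : ℕ) (f : X →ₗ[ℤ] M), N ≠ 0 ∧ ∀ x, g (f x) = N • x := by
  let N := g.range.toAddSubgroup.index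
  let scale : X →ₗ[ℤ] g.range :=
    (N • LinearMap.id).codRestrict g.range fun x => g.range.toAddSubgroup.nsmul_index_mem x
  refine ⟨N, (LinearEquiv.ofInjective g hg).symm ∘ₗ scale, hindex.index_ne_zero, fun x => ?_⟩
  exact congrArg Subtype.val ((LinearEquiv.ofInjective g hg).apply_symm_apply (scale x))

-- The weights span a subgroup of finite index `N`; the coordinates of `N • x` cut out the cone of
-- weights, and their scalar product averages to an invariant form.
theorem exists_isInvariantForm_forall_smul_le [Finite W] (hinj : Injective (weight ξ ω))
    (hF : IsOrbitSection W (AddMonoidHom.mrange (weight ξ ω) : Set X)) :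
    ∃ B : X →ₗ[ℤ] X →ₗ[ℤ] ℤ, IsInvariantForm W B ∧
      ∀ x ∈ AddMonoidHom.mrange (weight ξ ω), ∀ y ∈ AddMonoidHom.mrange (weight ξ ω),
        ∀ u : W, B x (u • y) ≤ B x y := by
  have := hF.isAddTorsionFree_of_injective hinj
  let g := Fintype.linearCombination ℤ (Sum.elim ξ ω)
  have hg : Injective g := linearCombination_sumElim_injective hinj
  have hindex : g.range.toAddSubgroup.FiniteIndex :=
    finiteIndex_of_forall_exists_smul_mem (W := W) fun x => by
      obtain ⟨w, p, hp⟩ := hF.exists_smul_mem x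
      exact ⟨w, _, (linearCombination_sumElim_eq_weight p).trans hp⟩
  obtain ⟨N, f, hN, hf⟩ := exists_linearMap_apply_eq_nsmul g hg hindex
  have hfinj : Injective f := fun x y hxy =>
    nsmul_right_injective hN (by simp only [← hf, hxy])
  have hcone : AddMonoidHom.mrange (weight ξ ω) =
      integralCone fun j => LinearMap.proj (Sum.inr j) ∘ₗ f := by
    ext x
    constructor
    · rintro ⟨p, rfl⟩ j
      have hfp : f (weight ξ ω p) = N • Sum.elim p.1 fun j => (p.2 j : ℤ) := hg <| by
        rw [hf, map_nsmul, ← linearCombination_sumElim_eq_weight]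
      rw [LinearMap.comp_apply, hfp, LinearMap.proj_apply]
      exact nsmul_nonneg (p.2 j).cast_nonneg N
    · intro hx
      refine hF.mem_of_nsmul_mem hN ⟨(fun i => f x (.inl i), fun j => (f x (.inr j)).toNat), ?_⟩
      rw [← hf, ← linearCombination_sumElim_eq_weight]
      congr 1
      ext (i | j)
      · rfl
      · exact Int.toNat_of_nonneg (hx j)
  obtain ⟨B, hB⟩ := exists_isInvariantForm_of_injective (W := W) f hfinj
  rw [hcone] at hF ⊢
  exact ⟨B, hB, fun x hx y hy => form_smul_le_of_mem_integralCone hB hF hx hy⟩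

theorem smul_eq_self_of_neg_mem {B : X →ₗ[ℤ] X →ₗ[ℤ] ℤ} (hB : IsInvariantForm W B) {F : Set X}
    (hmax : ∀ x ∈ F, ∀ y ∈ F, ∀ u : W, B x (u • y) ≤ B x y) {x : X} (hx : x ∈ F) (hnx : -x ∈ F)
    (u : W) : u • x = x := by
  refine hB.eq_of_self_le (hB.smul_smul u x x).le ?_
  simpa only [map_neg, LinearMap.neg_apply, neg_le_neg_iff] using hmax (-x) hnx x hx u

theorem sum_zsmul_mem_mrange_weight (a : ι → ℤ) :
    ∑ i, a i • ξ i ∈ AddMonoidHom.mrange (weight ξ ω) :=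
  ⟨(a, 0), by simp [weight_apply]⟩

theorem apply_mem_mrange_weight (j : κ) : ω j ∈ AddMonoidHom.mrange (weight ξ ω) := by
  classical
  exact ⟨(0, Pi.single j 1), by simp [weight_apply, Pi.single_apply]⟩

theorem smul_sum_zsmul_eq_self {B : X →ₗ[ℤ] X →ₗ[ℤ] ℤ} (hB : IsInvariantForm W B)
    (hmax : ∀ x ∈ AddMonoidHom.mrange (weight ξ ω), ∀ y ∈ AddMonoidHom.mrange (weight ξ ω),
      ∀ u : W, B x (u • y) ≤ B x y) (a : ι → ℤ) (w : W) :
    w • ∑ i, a i • ξ i = ∑ i, a i • ξ i := by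
  refine smul_eq_self_of_neg_mem hB hmax (sum_zsmul_mem_mrange_weight a) ?_ w
  have h := sum_zsmul_mem_mrange_weight (ξ := ξ) (ω := ω) (-a)
  simpa using h

end Weights

section Dominance

variable {X : Type*} [AddCommGroup X] {W : Type*} [Group W] [DistribMulAction W X]
  {B : X →ₗ[ℤ] X →ₗ[ℤ] ℤ} {F : Set X} {γ γ' δ δ' : X}

/-- The dominance order on exponents. When `F` is a closed Weyl chamber, this says that `γ` lies in
the convex hull of the orbit of `δ`. -/
def IsDominated (W : Type*) {X : Type*} [AddCommGroup X] [Group W] [DistribMulAction W X]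
    (B : X →ₗ[ℤ] X →ₗ[ℤ] ℤ) (F : Set X) (γ δ : X) : Prop :=
  ∀ w : W, ∀ x ∈ F, B (w • γ) x ≤ B δ x

theorem IsDominated.form_le (h : IsDominated W B F γ δ) {x : X} (hx : x ∈ F) : B γ x ≤ B δ x := by
  simpa only [one_smul] using h 1 x hx

theorem IsDominated.add (h : IsDominated W B F γ δ) (h' : IsDominated W B F γ' δ') :
    IsDominated W B F (γ + γ') (δ + δ') := by
  intro w x hx
  simp only [smul_add, map_add, LinearMap.add_apply]
  exact add_le_add (h w x hx) (h' w x hx)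

theorem IsDominated.form_self_le (hB : IsInvariantForm W B) (hF : IsOrbitSection W F)
    (h : IsDominated W B F γ δ) (hδ : δ ∈ F) : B γ γ ≤ B δ δ := by
  obtain ⟨w, hw⟩ := hF.exists_smul_mem γ
  calc B γ γ = B (w • γ) (w • γ) := (hB.smul_smul w γ γ).symm
    _ ≤ B δ (w • γ) := h w _ hw
    _ = B (w • γ) δ := hB.symm _ _
    _ ≤ B δ δ := h w δ hδ

theorem IsDominated.eq_of_form_self_le (hB : IsInvariantForm W B) (h : IsDominated W B F γ δ)
    (hγ : γ ∈ F) (hle : B δ δ ≤ B γ γ) : γ = δ := by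
  refine (hB.eq_of_self_le hle ?_).symm
  calc B γ γ ≤ B δ γ := h.form_le hγ
    _ = B γ δ := hB.symm _ _

theorem IsDominated.eq_of_add_eq (hB : IsInvariantForm W B) (hF : IsOrbitSection W F)
    (h : IsDominated W B F γ δ) (h' : IsDominated W B F γ' δ') (hδ : δ ∈ F)
    (hadd : γ + γ' = δ + δ') : γ = δ := by
  refine hB.eq_of_self_le (h.form_self_le hB hF hδ) ?_
  have hsum := congrArg (B δ) hadd
  rw [map_add, map_add] at hsum
  have hle := h'.form_le hδ
  rw [hB.symm γ', hB.symm δ'] at hle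
  linarith

end Dominance

section Invariants

variable {X : Type*} [AddCommGroup X] {W : Type*} [Group W] [DistribMulAction W X]

theorem mem_invSubring_iff {f : AddMonoidAlgebra ℤ X} :
    f ∈ invSubring W X ↔ ∀ (w : W) (x : X), f.coeff (w • x) = f.coeff x := by
  have hact (w : W) (x : X) : (actRing W w f).coeff (w • x) = f.coeff x :=
    Finsupp.mapDomain_apply (MulAction.injective w) f.coeff x
  refine ⟨fun hf w x => ?_, fun hf w => ?_⟩
  · rw [← hact w x, hf w]
  · ext x
    obtain ⟨y, rfl⟩ := MulAction.surjective w x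
    rw [hact, hf]

theorem IsOrbitSection.eq_of_forall_coeff_eq {F : Set X} (hF : IsOrbitSection W F)
    {f g : AddMonoidAlgebra ℤ X} (hf : f ∈ invSubring W X) (hg : g ∈ invSubring W X)
    (h : ∀ γ ∈ F, f.coeff γ = g.coeff γ) : f = g := by
  ext x
  obtain ⟨w, hw⟩ := hF.exists_smul_mem x
  rw [← mem_invSubring_iff.1 hf w, ← mem_invSubring_iff.1 hg w, h _ hw]

end Invariants

section OrbitSums

variable {X : Type*} [AddCommGroup X] [DecidableEq X] {W : Type*} [Group W] [Fintype W]
  [DistribMulAction W X]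

theorem coeff_orbitSum (δ γ : X) :
    (orbitSum W δ).coeff γ = if ∃ w : W, w • δ = γ then 1 else 0 := by
  classical
  rw [orbitSum, AddMonoidAlgebra.coeff_sum, Finsupp.finsetSum_apply]
  simp only [AddMonoidAlgebra.coeff_single, Finsupp.single_apply]
  rw [Finset.sum_ite_eq']
  simp only [Finset.mem_image, Finset.mem_univ, true_and]

theorem coeff_orbitSum_of_mem {F : Set X} (hF : IsOrbitSection W F) {δ γ : X} (hδ : δ ∈ F)
    (hγ : γ ∈ F) : (orbitSum W δ).coeff γ = if δ = γ then 1 else 0 := by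
  rw [coeff_orbitSum]
  congr 1
  refine propext ⟨?_, fun h => ⟨1, (one_smul W δ).trans h⟩⟩
  rintro ⟨w, rfl⟩
  exact (hF.smul_eq_self hδ hγ).symm

theorem orbitSum_eq_single {δ : X} (hδ : ∀ w : W, w • δ = δ) :
    orbitSum W δ = AddMonoidAlgebra.single δ 1 := by
  simp only [orbitSum, hδ, Finset.image_const Finset.univ_nonempty, Finset.sum_singleton]

theorem orbitSum_mem_invSubring (δ : X) : orbitSum W δ ∈ invSubring W X := by
  rw [mem_invSubring_iff]
  intro w x
  simp only [coeff_orbitSum]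
  congr 1
  refine propext ⟨?_, ?_⟩
  · rintro ⟨v, hv⟩
    exact ⟨w⁻¹ * v, by rw [mul_smul, hv, inv_smul_smul]⟩
  · rintro ⟨v, rfl⟩
    exact ⟨w * v, mul_smul w v δ⟩

open scoped Classical in
theorem IsOrbitSection.eq_sum_orbitSum {F : Set X} (hF : IsOrbitSection W F)
    {f : AddMonoidAlgebra ℤ X} (hf : f ∈ invSubring W X) :
    f = ∑ ε ∈ f.coeff.support with ε ∈ F, f.coeff ε • orbitSum W ε := by
  refine hF.eq_of_forall_coeff_eq hf
    (sum_mem fun ε _ => zsmul_mem (orbitSum_mem_invSubring ε) _) fun γ hγ => ?_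
  have hterm : ∀ ε ∈ f.coeff.support.filter (· ∈ F),
      (f.coeff ε • orbitSum W ε).coeff γ = if ε = γ then f.coeff ε else 0 := by
    intro ε hε
    rw [AddMonoidAlgebra.coeff_smul_apply,
      coeff_orbitSum_of_mem hF (Finset.mem_filter.1 hε).2 hγ, smul_ite, smul_zero, zsmul_one,
      Int.cast_id]
  rw [AddMonoidAlgebra.coeff_sum, Finsupp.finsetSum_apply, Finset.sum_congr rfl hterm,
    Finset.sum_ite_eq']
  simp [hγ, eq_comm]

theorem IsOrbitSection.mem_of_forall_orbitSum_mem {F : Set X} (hF : IsOrbitSection W F)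
    {f : AddMonoidAlgebra ℤ X} (hf : f ∈ invSubring W X)
    {A : AddSubgroup (AddMonoidAlgebra ℤ X)}
    (hA : ∀ ε ∈ F, f.coeff ε ≠ 0 → orbitSum W ε ∈ A) : f ∈ A := by
  classical
  rw [hF.eq_sum_orbitSum hf]
  refine sum_mem fun ε hε => zsmul_mem ?_ _
  obtain ⟨hsupp, hεF⟩ := Finset.mem_filter.1 hε
  exact hA ε hεF (Finsupp.mem_support_iff.1 hsupp)

end OrbitSums

section LeadingExponents

variable {X : Type*} [AddCommGroup X] {W : Type*} [Group W] [DistribMulAction W X]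
  {B : X →ₗ[ℤ] X →ₗ[ℤ] ℤ} {F : AddSubmonoid X} {f g : AddMonoidAlgebra ℤ X} {δ δ' : X}

/-- The monomial `e^δ`, with `δ ∈ F`, occurs in `f` with coefficient `1`, and all exponents of `f`
are dominated by `δ`. -/
structure HasLeadingExponent (W : Type*) {X : Type*} [AddCommGroup X] [Group W]
    [DistribMulAction W X] (B : X →ₗ[ℤ] X →ₗ[ℤ] ℤ) (F : AddSubmonoid X)
    (f : AddMonoidAlgebra ℤ X) (δ : X) : Prop where
  mem : δ ∈ F
  coeff_eq_one : f.coeff δ = 1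
  isDominated : ∀ γ, f.coeff γ ≠ 0 → IsDominated W B F γ δ

theorem hasLeadingExponent_orbitSum [DecidableEq X] [Fintype W] (hB : IsInvariantForm W B)
    (hmax : ∀ x ∈ F, ∀ y ∈ F, ∀ u : W, B x (u • y) ≤ B x y) (hδ : δ ∈ F) :
    HasLeadingExponent W B F (orbitSum W δ) δ where
  mem := hδ
  coeff_eq_one := by
    rw [coeff_orbitSum, if_pos ⟨1, one_smul W δ⟩]
  isDominated γ hγ w x hx := by
    rw [coeff_orbitSum] at hγ
    obtain ⟨v, rfl⟩ := (ite_ne_right_iff.1 hγ).1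
    rw [← mul_smul, hB.symm, hB.symm δ]
    exact hmax x hx δ hδ (w * v)

theorem HasLeadingExponent.mul (hB : IsInvariantForm W B) (hF : IsOrbitSection W (F : Set X))
    (hf : HasLeadingExponent W B F f δ) (hg : HasLeadingExponent W B F g δ') :
    HasLeadingExponent W B F (f * g) (δ + δ') where
  mem := F.add_mem hf.mem hg.mem
  coeff_eq_one := by
    have hunique : UniqueAdd f.coeff.support g.coeff.support δ δ' := by
      intro γ γ' hγ hγ' hadd
      have hγδ : γ = δ := (hf.isDominated γ (Finsupp.mem_support_iff.1 hγ)).eq_of_add_eq hB hF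
        (hg.isDominated γ' (Finsupp.mem_support_iff.1 hγ')) hf.mem hadd
      exact ⟨hγδ, add_left_cancel (hγδ ▸ hadd)⟩
    rw [AddMonoidAlgebra.coeff_mul_add_of_uniqueAdd hunique, hf.coeff_eq_one, hg.coeff_eq_one,
      mul_one]
  isDominated γ hγ := by
    classical
    obtain ⟨α, hα, β, hβ, rfl⟩ := Finset.mem_add.1
      (AddMonoidAlgebra.support_coeff_mul_subset f g (Finsupp.mem_support_iff.2 hγ))
    exact (hf.isDominated α (Finsupp.mem_support_iff.1 hα)).add
      (hg.isDominated β (Finsupp.mem_support_iff.1 hβ))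

theorem hasLeadingExponent_one : HasLeadingExponent W B F 1 0 where
  mem := F.zero_mem
  coeff_eq_one := by simp [AddMonoidAlgebra.one_def]
  isDominated γ hγ w x _ := by
    obtain rfl : γ = 0 := by
      by_contra hne
      exact hγ (by simp [AddMonoidAlgebra.one_def, Ne.symm hne])
    rw [smul_zero]

theorem HasLeadingExponent.pow (hB : IsInvariantForm W B) (hF : IsOrbitSection W (F : Set X))
    (hf : HasLeadingExponent W B F f δ) (n : ℕ) : HasLeadingExponent W B F (f ^ n) (n • δ) := by
  induction n with
  | zero => simpa only [pow_zero, zero_smul] using hasLeadingExponent_one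
  | succ n ih => simpa only [pow_succ, succ_nsmul] using ih.mul hB hF hf

theorem HasLeadingExponent.prod (hB : IsInvariantForm W B) (hF : IsOrbitSection W (F : Set X))
    {σ : Type*} {s : Finset σ} {f : σ → AddMonoidAlgebra ℤ X} {δ : σ → X}
    (hf : ∀ i ∈ s, HasLeadingExponent W B F (f i) (δ i)) :
    HasLeadingExponent W B F (∏ i ∈ s, f i) (∑ i ∈ s, δ i) := by
  classical
  induction s using Finset.induction_on with
  | empty => simpa only [Finset.prod_empty, Finset.sum_empty] using hasLeadingExponent_one
  | insert i s hi ih =>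
    rw [Finset.prod_insert hi, Finset.sum_insert hi]
    exact (hf i (Finset.mem_insert_self i s)).mul hB hF
      (ih fun j hj => hf j (Finset.mem_insert_of_mem hj))

theorem linearIndependent_of_hasLeadingExponent (hB : IsInvariantForm W B) {P : Type*}
    {b : P → AddMonoidAlgebra ℤ X} {wt : P → X} (hwt : Injective wt)
    (hb : ∀ p, HasLeadingExponent W B F (b p) (wt p)) : LinearIndependent ℤ b := by
  rw [linearIndependent_iff]
  intro c hc
  by_contra hne
  obtain ⟨p, hp, hmax⟩ := Finset.exists_max_image c.support (fun p => B (wt p) (wt p))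
    (Finsupp.support_nonempty_iff.2 hne)
  have hcoeff : ∀ q ∈ c.support, q ≠ p → (b q).coeff (wt p) = 0 := by
    intro q hq hqp
    by_contra hcoeff
    have heq := ((hb q).isDominated _ hcoeff).eq_of_form_self_le hB (hb p).mem (hmax q hq)
    exact hqp (hwt heq).symm
  have hsum : (Finsupp.linearCombination ℤ b c).coeff (wt p) = c p := by
    rw [Finsupp.linearCombination_apply, Finsupp.sum, AddMonoidAlgebra.coeff_sum,
      Finsupp.finsetSum_apply, Finset.sum_eq_single_of_mem p hp]
    · rw [AddMonoidAlgebra.coeff_smul_apply, (hb p).coeff_eq_one, smul_eq_mul, mul_one]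
    · intro q hq hqp
      rw [AddMonoidAlgebra.coeff_smul_apply, hcoeff q hq hqp, smul_zero]
  rw [hc] at hsum
  exact Finsupp.mem_support_iff.1 hp hsum.symm

-- Induction on `B δ δ`: the lower terms of an invariant with leading exponent `δ` are shorter.
theorem orbitSum_mem_of_forall_exists_hasLeadingExponent [DecidableEq X] [Fintype W]
    (hB : IsInvariantForm W B) (hF : IsOrbitSection W (F : Set X))
    {A : AddSubgroup (AddMonoidAlgebra ℤ X)}
    (hA : ∀ δ ∈ F, ∃ f ∈ A, f ∈ invSubring W X ∧ HasLeadingExponent W B F f δ) (hδ : δ ∈ F) :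
    orbitSum W δ ∈ A := by
  induction hn : (B δ δ).toNat using Nat.strong_induction_on generalizing δ with
  | _ n ih =>
    obtain ⟨f, hfA, hfinv, hf⟩ := hA δ hδ
    suffices hlower : f - orbitSum W δ ∈ A from (sub_sub_cancel f (orbitSum W δ)) ▸
      sub_mem hfA hlower
    refine hF.mem_of_forall_orbitSum_mem (sub_mem hfinv (orbitSum_mem_invSubring δ)) ?_
    intro ε hε hne
    rw [AddMonoidAlgebra.coeff_sub, Finsupp.sub_apply, coeff_orbitSum_of_mem hF hδ hε] at hne
    obtain rfl | hδε := eq_or_ne δ ε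
    · simp [hf.coeff_eq_one] at hne
    · rw [if_neg hδε, sub_zero] at hne
      have hlt : B ε ε < B δ δ := lt_of_not_ge fun hle =>
        hδε ((hf.isDominated ε hne).eq_of_form_self_le hB hε hle).symm
      have := hB.self_nonneg ε
      exact ih _ (by omega) hε rfl

end LeadingExponents

section FundamentalHom

variable {X : Type*} [AddCommGroup X] [DecidableEq X] {W : Type*} [Group W] [Fintype W]
  [DistribMulAction W X] {ι κ : Type*} [Fintype ι] [Fintype κ] {ξ : ι → X} {ω : κ → X}

/-- The multiplicative map sending the monomial with exponents `(a, b)` to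
`e^{Σ aᵢξᵢ} Π S(ωⱼ)^{bⱼ}`. -/
noncomputable def monomialHom (W : Type*) {X : Type*} [AddCommGroup X] [DecidableEq X]
    [Group W] [Fintype W] [DistribMulAction W X] {ι κ : Type*} [Fintype ι] [Fintype κ]
    (ξ : ι → X) (ω : κ → X) : Multiplicative ((ι → ℤ) × (κ → ℕ)) →* AddMonoidAlgebra ℤ X where
  toFun p := AddMonoidAlgebra.single (∑ i, p.toAdd.1 i • ξ i) 1 *
    ∏ j, orbitSum W (ω j) ^ p.toAdd.2 j
  map_one' := by simp [AddMonoidAlgebra.one_def]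
  map_mul' p q := by
    simp only [toAdd_mul, Prod.fst_add, Prod.snd_add, Pi.add_apply, add_smul, pow_add,
      Finset.sum_add_distrib, Finset.prod_mul_distrib]
    rw [← one_mul (1 : ℤ), ← AddMonoidAlgebra.single_mul_single, one_mul]
    ring

theorem monomialHom_apply (p : (ι → ℤ) × (κ → ℕ)) :
    monomialHom W ξ ω (Multiplicative.ofAdd p) =
      AddMonoidAlgebra.single (∑ i, p.1 i • ξ i) 1 * ∏ j, orbitSum W (ω j) ^ p.2 j :=
  rfl

/-- The homomorphism `Φ` of the theorem. Its source `ℤ[xᵢ^{±1}] ⊗ ℤ[wⱼ]` is encoded as the monoid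
algebra of the exponents. -/
noncomputable def fundamentalHom (W : Type*) {X : Type*} [AddCommGroup X] [DecidableEq X]
    [Group W] [Fintype W] [DistribMulAction W X] {ι κ : Type*} [Fintype ι] [Fintype κ]
    (ξ : ι → X) (ω : κ → X) :
    AddMonoidAlgebra ℤ ((ι → ℤ) × (κ → ℕ)) →ₐ[ℤ] AddMonoidAlgebra ℤ X :=
  AddMonoidAlgebra.lift ℤ _ _ (monomialHom W ξ ω)

theorem fundamentalHom_single (p : (ι → ℤ) × (κ → ℕ)) :
    fundamentalHom W ξ ω (AddMonoidAlgebra.single p 1) =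
      AddMonoidAlgebra.single (∑ i, p.1 i • ξ i) 1 * ∏ j, orbitSum W (ω j) ^ p.2 j := by
  rw [fundamentalHom, AddMonoidAlgebra.lift_single, one_smul, monomialHom_apply]

theorem fundamentalHom_eq_linearCombination (f : AddMonoidAlgebra ℤ ((ι → ℤ) × (κ → ℕ))) :
    fundamentalHom W ξ ω f =
      Finsupp.linearCombination ℤ (fun p => monomialHom W ξ ω (.ofAdd p)) f.coeff := by
  rw [fundamentalHom, AddMonoidAlgebra.lift_apply, Finsupp.linearCombination_apply]

theorem fundamentalHom_injective
    (h : LinearIndependent ℤ fun p => monomialHom W ξ ω (.ofAdd p)) :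
    Injective (fundamentalHom W ξ ω) := by
  intro f g hfg
  rw [fundamentalHom_eq_linearCombination, fundamentalHom_eq_linearCombination] at hfg
  exact AddMonoidAlgebra.coeff_injective (h hfg)

theorem monomialHom_mem_invSubring (hξ : ∀ (a : ι → ℤ) (w : W), w • ∑ i, a i • ξ i = ∑ i, a i • ξ i)
    (p : (ι → ℤ) × (κ → ℕ)) : monomialHom W ξ ω (.ofAdd p) ∈ invSubring W X := by
  rw [monomialHom_apply, ← orbitSum_eq_single (hξ p.1)]
  exact mul_mem (orbitSum_mem_invSubring _)
    (prod_mem fun j _ => pow_mem (orbitSum_mem_invSubring _) _)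

theorem fundamentalHom_mem_invSubring
    (hξ : ∀ (a : ι → ℤ) (w : W), w • ∑ i, a i • ξ i = ∑ i, a i • ξ i)
    (f : AddMonoidAlgebra ℤ ((ι → ℤ) × (κ → ℕ))) : fundamentalHom W ξ ω f ∈ invSubring W X := by
  rw [fundamentalHom_eq_linearCombination, Finsupp.linearCombination_apply]
  exact sum_mem fun p _ => zsmul_mem (monomialHom_mem_invSubring hξ p) _

theorem hasLeadingExponent_monomialHom {B : X →ₗ[ℤ] X →ₗ[ℤ] ℤ} (hB : IsInvariantForm W B)
    (hF : IsOrbitSection W (AddMonoidHom.mrange (weight ξ ω) : Set X))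
    (hmax : ∀ x ∈ AddMonoidHom.mrange (weight ξ ω), ∀ y ∈ AddMonoidHom.mrange (weight ξ ω),
      ∀ u : W, B x (u • y) ≤ B x y) (p : (ι → ℤ) × (κ → ℕ)) :
    HasLeadingExponent W B (AddMonoidHom.mrange (weight ξ ω)) (monomialHom W ξ ω (.ofAdd p))
      (weight ξ ω p) := by
  simp only [monomialHom_apply, weight_apply, natCast_zsmul]
  rw [← orbitSum_eq_single (smul_sum_zsmul_eq_self hB hmax p.1)]
  exact (hasLeadingExponent_orbitSum hB hmax (sum_zsmul_mem_mrange_weight p.1)).mul hB hF <|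
    .prod hB hF fun j _ =>
      (hasLeadingExponent_orbitSum hB hmax (apply_mem_mrange_weight j)).pow hB hF (p.2 j)

end FundamentalHom

theorem statement16_general {X W ι κ : Type*} [AddCommGroup X] [DecidableEq X] [Group W] [Fintype W]
    [DistribMulAction W X] [Fintype ι] [Fintype κ] (ξ : ι → X) (ω : κ → X)
    (hinj : Injective (weight ξ ω)) (hF : IsOrbitSection W (Set.range (weight ξ ω))) :
    ∃ Φ : AddMonoidAlgebra ℤ ((ι → ℤ) × (κ → ℕ)) →+* AddMonoidAlgebra ℤ X,
      (∀ p : (ι → ℤ) × (κ → ℕ),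
        Φ (AddMonoidAlgebra.single p 1)
          = AddMonoidAlgebra.single (∑ i, p.1 i • ξ i) 1 * ∏ j, orbitSum W (ω j) ^ p.2 j) ∧
      Injective Φ ∧ Φ.range = invSubring W X := by
  rw [← AddMonoidHom.coe_mrange] at hF
  obtain ⟨B, hB, hmax⟩ := exists_isInvariantForm_forall_smul_le hinj hF
  have hfix := smul_sum_zsmul_eq_self hB hmax
  have hlead := hasLeadingExponent_monomialHom hB hF hmax
  refine ⟨(fundamentalHom W ξ ω).toRingHom, fundamentalHom_single, fundamentalHom_injective
    (linearIndependent_of_hasLeadingExponent hB hinj hlead), le_antisymm ?_ fun f hf => ?_⟩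
  · rintro _ ⟨f, rfl⟩
    exact fundamentalHom_mem_invSubring hfix f
  · let A := (fundamentalHom W ξ ω).toRingHom.range.toAddSubgroup
    have horbitSum : ∀ δ ∈ AddMonoidHom.mrange (weight ξ ω), orbitSum W δ ∈ A := by
      refine fun _ => orbitSum_mem_of_forall_exists_hasLeadingExponent hB hF ?_
      rintro _ ⟨p, rfl⟩
      exact ⟨_, ⟨_, fundamentalHom_single p⟩, monomialHom_mem_invSubring hfix p, hlead p⟩
    exact hF.mem_of_forall_orbitSum_mem (A := A) hf fun ε hε _ => horbitSum ε hε

/-- Let `X` be a free abelian group with an action of a finite group `W`,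
`ξ₁,…,ξ_l ∈ X` fixed by `W`, `ω₁,…,ω_r ∈ X`, and `F ⊆ X` a set meeting every `W`-orbit in
exactly one point in which every element is uniquely of the form `Σ aᵢξᵢ + Σ bⱼωⱼ`
(`aᵢ ∈ ℤ`, `bⱼ ∈ ℕ`), and conversely.  Given a partial order on `F` such that each element
dominates only finitely many others and
`S(δ)·S(δ') = S(δ+δ') + (lower order terms)`, the ring homomorphism `Φ` from
`ℤ[x₁^{±1},…,x_l^{±1}] ⊗ ℤ[w₁,…,w_r]` (realized as the monomial algebra on
`ℤ^l × ℕ^r`) determined by `Φ(xᵢ) = e^{ξᵢ}`, `Φ(wⱼ) = S(ωⱼ)` is an isomorphism onto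
`ℤ[X]^W`. -/
theorem statement16
    {X W : Type*} [AddCommGroup X] [DecidableEq X] [Module.Free ℤ X]
    [Group W] [Fintype W] [DistribMulAction W X]
    {l r : ℕ} (ξ : Fin l → X) (ω : Fin r → X)
    (hξ : ∀ (w : W) (i : Fin l), w • ξ i = ξ i)
    (F : Set X)
    (horbit : ∀ δ : X, ∃! γ : X, γ ∈ F ∧ γ ∈ MulAction.orbit W δ)
    (hrep : ∀ δ ∈ F, ∃! p : (Fin l → ℤ) × (Fin r → ℕ),
        δ = (∑ i, p.1 i • ξ i) + ∑ j, (p.2 j : ℤ) • ω j)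
    (hrep' : ∀ p : (Fin l → ℤ) × (Fin r → ℕ),
        ((∑ i, p.1 i • ξ i) + ∑ j, (p.2 j : ℤ) • ω j) ∈ F)
    (le : X → X → Prop)
    (hrefl : ∀ δ ∈ F, le δ δ)
    (htrans : ∀ δ ∈ F, ∀ ε ∈ F, ∀ η ∈ F, le δ ε → le ε η → le δ η)
    (hantisymm : ∀ δ ∈ F, ∀ ε ∈ F, le δ ε → le ε δ → δ = ε)
    (hfin : ∀ δ ∈ F, {ε : X | ε ∈ F ∧ le ε δ ∧ ε ≠ δ}.Finite)
    (hmul : ∀ δ ∈ F, ∀ δ' ∈ F, ∃ (T : Finset X) (a : X → ℤ),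
        (∀ ε ∈ T, ε ∈ F ∧ le ε (δ + δ') ∧ ε ≠ δ + δ') ∧
        orbitSum W δ * orbitSum W δ'
          = orbitSum W (δ + δ') + ∑ ε ∈ T, a ε • orbitSum W ε) :
    ∃ Φ : AddMonoidAlgebra ℤ ((Fin l → ℤ) × (Fin r → ℕ)) →+* AddMonoidAlgebra ℤ X,
      (∀ p : (Fin l → ℤ) × (Fin r → ℕ),
        Φ (AddMonoidAlgebra.single p 1)
          = AddMonoidAlgebra.single (∑ i, p.1 i • ξ i) 1 * ∏ j, orbitSum W (ω j) ^ p.2 j) ∧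
      Function.Injective Φ ∧ Φ.range = invSubring W X := by
  have hrange : Set.range (weight ξ ω) = F := Set.Subset.antisymm (Set.range_subset_iff.2 hrep')
    fun δ hδ => (hrep δ hδ).exists.imp fun _ => Eq.symm
  exact statement16_general ξ ω (fun p _ => (hrep _ (hrep' p)).unique rfl) (hrange ▸ horbit)
end
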